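/- As h → 0 with ε = ε(h) → 0 and ε(h)/√h → ∞, one has E( X̃_h²·1_{|X̃_h| ≤ ε} ) = σ²h + A(ε,h)·h + R(h), where the remainder decomposes as R(h) = O(h³·ε^{−Y−2}) + O(h²·ε^{2−2Y}) + O(h^{1/2}·ε·e^{−ε²/(2σ²h)}) + O(h^{1/2}·ε^{3−Y}·e^{−ε²/(8σ²h)}) (a sum of four functions, each big-O of the indicated rate). -/

import Mathlib

open MeasureTheory ProbabilityTheory Filter Asymptotics Set
open scoped Topology NNReal ENNReal Real

noncomputable section

/-- The Lévy density `s(x) = (C₊·1_{x>0} + C₋·1_{x<0})·q(x)·|x|^{−1−Y}`. -/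
def levyDensity (Y Cp Cm : ℝ) (q : ℝ → ℝ) (x : ℝ) : ℝ :=
  (if 0 < x then Cp else if x < 0 then Cm else 0) * q x * |x| ^ (-1 - Y)

/-- The Lévy measure `ν(dx) = s(x) dx`. -/
def levyMeasure (Y Cp Cm : ℝ) (q : ℝ → ℝ) : Measure ℝ :=
  volume.withDensity fun x => ENNReal.ofReal (levyDensity Y Cp Cm q x)

/-- The Lévy exponent `ψ_J(u) = ibu + ∫ (e^{iux} − 1 − iux·1_{|x|≤1}) ν(dx)`. -/
def psiJ (b Y Cp Cm : ℝ) (q : ℝ → ℝ) (u : ℝ) : ℂ :=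
  Complex.I * b * u +
    ∫ x : ℝ,
      (Complex.exp (Complex.I * u * x) - 1 - (if |x| ≤ 1 then Complex.I * u * x else 0))
      ∂(levyMeasure Y Cp Cm q)

/-- The scale parameter `ς = ((C₊+C₋)Γ(−Y)|cos(πY/2)|)^{1/Y}`. -/
def varsigma (Y Cp Cm : ℝ) : ℝ :=
  ((Cp + Cm) * Real.Gamma (-Y) * |Real.cos (π * Y / 2)|) ^ (1 / Y)

/-- The stable part of the Lévy exponent:
`ς^Y |u|^Y (1 − iβ·sgn(u)·tan(πY/2))` with `β = (C₊−C₋)/(C₊+C₋)`. -/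
def stablePart (Y Cp Cm : ℝ) (u : ℝ) : ℂ :=
  (varsigma Y Cp Cm ^ Y * |u| ^ Y : ℝ) *
    (1 - Complex.I * ((Cp - Cm) / (Cp + Cm)) * Real.sign u * Real.tan (π * Y / 2))

/-- Characteristic function of `X̃_h`, the time-`h` marginal of a Brownian motion with
variance `σ²` plus an independent strictly `Y`-stable process. -/
def tildeCF (σ Y Cp Cm : ℝ) (h u : ℝ) : ℂ :=
  Complex.exp (-(σ ^ 2 * u ^ 2 * h / 2) - h * stablePart Y Cp Cm u)


/-- The centering term `A(ε,h)`. -/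
def Afun (Y Cp Cm σ : ℝ) (ε h : ℝ) : ℝ :=
  (Cp + Cm) / (2 - Y) * ε ^ (2 - Y)
    - (Cp + Cm) * ((Y + 1) * (Y + 2) / (2 * Y)) * σ ^ 2 * h * ε ^ (-Y)

/-!
Fourier inversion writes the second moment of a law `μ` truncated at `ε` as
`(2 / π) ε² ∫₀^∞ k(v) Re φ(v / ε) dv`, where `φ` is the characteristic function of `μ` and `k` is
the cosine transform of `z²` on `[0, 1]`. Since `φ` is the product of a Gaussian and a stable
factor, subtracting the same formula for the centred Gaussian law leaves
`∫₀^∞ k(v) e^{-τv²/2} (Re e^{-lcv^Y} - 1) dv` with `τ = σ²h / ε²`, `l = h ε^{-Y}` and `c` the stable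
exponent at `1`.

The kernel `k` is a combination of `cos v` and `sin v` with powers of `v` as coefficients. Rotating
the half-line into the upper half-plane turns these oscillations into exponential decay, by a small
enough angle that neither the Gaussian nor the stable factor grows. So the error in replacing
`e^{-lcv^Y} - 1` by `-lcv^Y` is `O(l²)` uniformly in `τ`, which gives `O(h² ε^{2-2Y})`, and the
linear term has an expansion in `τ` whose coefficients are Gamma integrals. Its first two terms, by
the reflection formula for `Γ`, are the two terms of `A`, and the error `O(l τ²)` is
`O(h³ ε^{-Y-2})`. The Gaussian law itself contributes `σ²h` minus its tail.
-/

open Complex (I)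

/-! ### Rotation of the path of integration -/

/-- The closed sector between the rays of argument `0` and `θ`, without its vertex; it is used for
`|θ| < π`. -/
def sector (θ : ℝ) : Set ℂ :=
  {u | u ≠ 0 ∧ u.arg ∈ uIcc 0 θ}

lemma exp_mul_exp_mul_I_mem_sector {θ α : ℝ} (hθ : |θ| < π) (hα : α ∈ uIcc 0 θ) (t : ℝ) :
    Complex.exp (t + α * I) ∈ sector θ := by
  have hα' : |α| < π := by simpa using (abs_sub_left_of_mem_uIcc hα).trans_lt (by simpa using hθ)
  refine ⟨Complex.exp_ne_zero _, ?_⟩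
  rw [← Complex.log_im, Complex.log_exp] <;> simp [(abs_lt.1 hα').1, (abs_lt.1 hα').2.le, hα]

section Substitution

variable {E : Type*} [NormedAddCommGroup E] [NormedSpace ℝ E]

lemma integral_Ioi_zero_eq_integral_exp_smul (g : ℝ → E) :
    ∫ v in Ioi 0, g v = ∫ t, Real.exp t • g (Real.exp t) := by
  have h := integral_image_eq_integral_abs_deriv_smul MeasurableSet.univ
    (fun t _ => (Real.hasDerivAt_exp t).hasDerivWithinAt) Real.exp_injective.injOn g
  simpa only [image_univ, Real.range_exp, Real.abs_exp, setIntegral_univ] using h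

lemma integrableOn_Ioi_zero_iff_integrable_exp_smul (g : ℝ → E) :
    IntegrableOn g (Ioi 0) ↔ Integrable fun t => Real.exp t • g (Real.exp t) := by
  have h := integrableOn_image_iff_integrableOn_abs_deriv_smul MeasurableSet.univ
    (fun t _ => (Real.hasDerivAt_exp t).hasDerivWithinAt) Real.exp_injective.injOn g
  simpa only [image_univ, Real.range_exp, Real.abs_exp, integrableOn_univ] using h

end Substitution

lemma integrableOn_Ioi_zero_of_norm_le_rpow {E : Type*} [NormedAddCommGroup E] {g : ℝ → E}
    {M N p q : ℝ}
    (hg : ContinuousOn g (Ioi 0)) (hp : -1 < p) (hq : q < -1)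
    (hM : ∀ v, 0 < v → ‖g v‖ ≤ M * v ^ p) (hN : ∀ v, 0 < v → ‖g v‖ ≤ N * v ^ q) :
    IntegrableOn g (Ioi 0) := by
  rw [← Ioc_union_Ioi_eq_Ioi zero_le_one]
  have hM_int : IntegrableOn (fun v : ℝ => M * v ^ p) (Ioc 0 1) :=
    (intervalIntegrable_iff_integrableOn_Ioc_of_le zero_le_one).1
      ((intervalIntegral.intervalIntegrable_rpow' hp).const_mul M)
  have hN_int : IntegrableOn (fun v : ℝ => N * v ^ q) (Ioi 1) :=
    (integrableOn_Ioi_rpow_of_lt hq one_pos).const_mul N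
  refine .union (hM_int.mono' ?_ ?_) (hN_int.mono' ?_ ?_)
  · exact (hg.mono Ioc_subset_Ioi_self).aestronglyMeasurable measurableSet_Ioc
  · exact (ae_restrict_mem measurableSet_Ioc).mono fun v hv => hM v hv.1
  · exact (hg.mono (Ioi_subset_Ioi zero_le_one)).aestronglyMeasurable measurableSet_Ioi
  · exact (ae_restrict_mem measurableSet_Ioi).mono fun v hv => hN v (one_pos.trans hv)

section Rotation

variable {E : Type*} [NormedAddCommGroup E] {F : ℂ → E} {M N p q θ α : ℝ}

lemma ofReal_mul_exp_mem_sector (hθ : |θ| < π) (hα : α ∈ uIcc 0 θ) {v : ℝ} (hv : 0 < v) :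
    v * Complex.exp (α * I) ∈ sector θ := by
  simpa [Complex.exp_add, ← Complex.ofReal_exp, Real.exp_log hv]
    using exp_mul_exp_mul_I_mem_sector hθ hα (Real.log v)

lemma norm_ofReal_mul_exp {v : ℝ} (hv : 0 < v) (α : ℝ) : ‖v * Complex.exp (α * I)‖ = v := by
  simp [Complex.norm_exp_ofReal_mul_I, abs_of_pos hv]

lemma integrableOn_ray_of_norm_le_rpow (hθ : |θ| < π) (hα : α ∈ uIcc 0 θ)
    (hF : ContinuousOn F (sector θ)) (hp : -1 < p) (hq : q < -1)
    (hM : ∀ u ∈ sector θ, ‖F u‖ ≤ M * ‖u‖ ^ p) (hN : ∀ u ∈ sector θ, ‖F u‖ ≤ N * ‖u‖ ^ q) :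
    IntegrableOn (fun v : ℝ => F (v * Complex.exp (α * I))) (Ioi 0) := by
  have hmem : ∀ v : ℝ, 0 < v → v * Complex.exp (α * I) ∈ sector θ := fun v hv =>
    ofReal_mul_exp_mem_sector hθ hα hv
  refine integrableOn_Ioi_zero_of_norm_le_rpow (hF.comp (by fun_prop) hmem) hp hq
    (M := M) (N := N) (fun v hv => ?_) fun v hv => ?_
  · simpa only [norm_ofReal_mul_exp hv] using hM _ (hmem v hv)
  · simpa only [norm_ofReal_mul_exp hv] using hN _ (hmem v hv)

variable [NormedSpace ℂ E]

lemma integral_horizontal_sub_eq_vertical [CompleteSpace E] {H : ℂ → E} (a b θ : ℝ)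
    (hH : DifferentiableOn ℂ H (uIcc a b ×ℂ uIcc 0 θ)) :
    (∫ x in a..b, H x) - ∫ x in a..b, H (x + θ * I) =
      I • (∫ y in (0 : ℝ)..θ, H (a + y * I)) - I • ∫ y in (0 : ℝ)..θ, H (b + y * I) := by
  have h := Complex.integral_boundary_rect_eq_zero_of_differentiableOn H a (b + θ * I)
    (by simpa using hH)
  have h' : (∫ x in a..b, H x) - (∫ x in a..b, H (x + θ * I)) +
      I • (∫ y in (0 : ℝ)..θ, H (b + y * I)) - I • (∫ y in (0 : ℝ)..θ, H (a + y * I)) = 0 := by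
    simpa using h
  rw [← sub_eq_zero, ← h']
  abel

/-- The integrand of `∫ F(u) du` in the logarithmic coordinate `u = exp w`. -/
def expPullback (F : ℂ → E) (w : ℂ) : E :=
  Complex.exp w • F (Complex.exp w)

lemma norm_expPullback_le (hθ : |θ| < π) (hα : α ∈ uIcc 0 θ) (t : ℝ)
    (hM : ∀ u ∈ sector θ, ‖F u‖ ≤ M * ‖u‖ ^ p) :
    ‖expPullback F (t + α * I)‖ ≤ M * Real.exp ((p + 1) * t) := by
  have hnorm : ‖Complex.exp (t + α * I)‖ = Real.exp t := by simp [Complex.norm_exp]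
  calc ‖expPullback F (t + α * I)‖
      ≤ Real.exp t * (M * Real.exp t ^ p) := by
        rw [expPullback, norm_smul, hnorm]
        gcongr
        simpa only [hnorm] using hM _ (exp_mul_exp_mul_I_mem_sector hθ hα t)
    _ = M * Real.exp ((p + 1) * t) := by
        rw [← Real.exp_mul, add_mul, one_mul, Real.exp_add, mul_comm t p]; ring

lemma tendsto_integral_vertical_expPullback (hθ : |θ| < π) {l : Filter ℝ}
    (hM : ∀ u ∈ sector θ, ‖F u‖ ≤ M * ‖u‖ ^ p) (hl : Tendsto (fun t => (p + 1) * t) l atBot) :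
    Tendsto (fun t : ℝ => ∫ y in (0 : ℝ)..θ, expPullback F (t + y * I)) l (𝓝 0) := by
  refine squeeze_zero_norm (fun t => intervalIntegral.norm_integral_le_of_norm_le_const
    fun y hy => norm_expPullback_le hθ (uIoc_subset_uIcc hy) t hM) ?_
  simpa using ((Real.tendsto_exp_atBot.comp hl).const_mul M).mul_const |θ - 0|

theorem integral_Ioi_eq_integral_ray [CompleteSpace E] (hθ : |θ| < π)
    (hF : DifferentiableOn ℂ F (sector θ)) (hp : -1 < p) (hq : q < -1)
    (hM : ∀ u ∈ sector θ, ‖F u‖ ≤ M * ‖u‖ ^ p) (hN : ∀ u ∈ sector θ, ‖F u‖ ≤ N * ‖u‖ ^ q) :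
    ∫ v in Ioi (0 : ℝ), F v =
      Complex.exp (θ * I) • ∫ v in Ioi (0 : ℝ), F (v * Complex.exp (θ * I)) := by
  have hray : ∀ α ∈ uIcc 0 θ, IntegrableOn
      (fun v : ℝ => Complex.exp (α * I) • F (v * Complex.exp (α * I))) (Ioi 0) := fun α hα =>
    (integrableOn_ray_of_norm_le_rpow hθ hα hF.continuousOn hp hq hM hN).smul _
  have hlog : ∀ α t : ℝ,
      Real.exp t • Complex.exp (α * I) • F (Real.exp t * Complex.exp (α * I)) =
        expPullback F (t + α * I) := fun α t => by
    rw [expPullback, Complex.exp_add, Complex.ofReal_exp, mul_smul, ← Complex.ofReal_exp,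
      Complex.coe_smul]
  have hpull : ∀ α ∈ uIcc 0 θ, Integrable fun t : ℝ => expPullback F (t + α * I) :=
    fun α hα => by
      simpa only [integrableOn_Ioi_zero_iff_integrable_exp_smul, hlog] using hray α hα
  have hint : ∀ α : ℝ,
      ∫ v in Ioi (0 : ℝ), Complex.exp (α * I) • F (v * Complex.exp (α * I)) =
        ∫ t : ℝ, expPullback F (t + α * I) := fun α => by
    simp only [integral_Ioi_zero_eq_integral_exp_smul, hlog]
  have hlim : ∀ α ∈ uIcc 0 θ, Tendsto (fun T : ℝ => ∫ t in -T..T, expPullback F (t + α * I))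
      atTop (𝓝 (∫ t : ℝ, expPullback F (t + α * I))) := fun α hα =>
    intervalIntegral_tendsto_integral (hpull α hα) tendsto_neg_atTop_atBot tendsto_id
  have hdiff : ∀ T : ℝ, DifferentiableOn ℂ (expPullback F) (uIcc (-T) T ×ℂ uIcc 0 θ) :=
    fun T => Complex.differentiable_exp.differentiableOn.smul
      (hF.comp Complex.differentiable_exp.differentiableOn fun w hw => by
        simpa using exp_mul_exp_mul_I_mem_sector hθ hw.2 w.re)
  have hleft := tendsto_integral_vertical_expPullback (l := atBot) hθ hM
    (tendsto_id.const_mul_atBot (by linarith))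
  have hright := tendsto_integral_vertical_expPullback (l := atTop) hθ hN
    (tendsto_id.const_mul_atTop_of_neg (by linarith))
  have hvert := ((hleft.comp tendsto_neg_atTop_atBot).const_smul I).sub (hright.const_smul I)
  have hsides := (hlim 0 left_mem_uIcc).sub (hlim θ right_mem_uIcc)
  have heq : ∫ t : ℝ, expPullback F (t + (0 : ℝ) * I) = ∫ t : ℝ, expPullback F (t + θ * I) := by
    rw [← sub_eq_zero]
    refine tendsto_nhds_unique hsides ?_
    simpa [integral_horizontal_sub_eq_vertical _ _ _ (hdiff _), Function.comp_def] using hvert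
  rw [← integral_smul, hint, ← heq, ← hint]
  simp

end Rotation

/-! ### Sectors and exponentials -/

section SectorGeometry

variable {θ : ℝ} {u : ℂ}

lemma abs_arg_le_of_mem_sector (hu : u ∈ sector θ) : |u.arg| ≤ |θ| := by
  simpa using abs_sub_left_of_mem_uIcc hu.2

lemma sector_subset_slitPlane (hθ : |θ| < π) : sector θ ⊆ Complex.slitPlane := by
  intro u hu
  refine Complex.mem_slitPlane_iff_arg.2 ⟨fun h => ?_, hu.1⟩
  have harg := abs_arg_le_of_mem_sector hu
  rw [h, abs_of_pos Real.pi_pos] at harg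
  linarith

lemma norm_mul_cos_le_re (hθ : |θ| ≤ π) (hu : u ∈ sector θ) : ‖u‖ * Real.cos θ ≤ u.re := by
  rw [← Complex.norm_mul_cos_arg, ← Real.cos_abs θ, ← Real.cos_abs u.arg]
  gcongr
  exact Real.cos_le_cos_of_nonneg_of_le_pi (abs_nonneg _) hθ (abs_arg_le_of_mem_sector hu)

lemma im_nonneg_of_mem_sector (hθ : 0 ≤ θ) (hu : u ∈ sector θ) : 0 ≤ u.im := by
  have harg := hu.2
  rw [uIcc_of_le hθ] at harg
  exact Complex.arg_nonneg_iff.1 harg.1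

lemma half_norm_sq_le_re_sq (hθ : θ ∈ Ioc 0 (π / 6)) (hu : u ∈ sector θ) :
    ‖u‖ ^ 2 / 2 ≤ (u ^ 2).re := by
  have hcos : √3 / 2 ≤ Real.cos θ := by
    rw [← Real.cos_pi_div_six]
    exact Real.cos_le_cos_of_nonneg_of_le_pi hθ.1.le (by linarith [Real.pi_pos]) hθ.2
  have hre : ‖u‖ * (√3 / 2) ≤ u.re :=
    (mul_le_mul_of_nonneg_left hcos (norm_nonneg u)).trans
      (norm_mul_cos_le_re (abs_le.2 ⟨by linarith [hθ.1, Real.pi_pos],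
        by linarith [hθ.2, Real.pi_pos]⟩) hu)
  have hsq : (‖u‖ * (√3 / 2)) ^ 2 ≤ u.re ^ 2 := by gcongr
  have hnorm : ‖u‖ ^ 2 = u.re ^ 2 + u.im ^ 2 := by
    rw [← Complex.normSq_eq_norm_sq, Complex.normSq_apply]; ring
  rw [mul_pow, div_pow, Real.sq_sqrt zero_le_three] at hsq
  rw [sq u, Complex.mul_re]
  linarith

lemma exists_sector_re_mul_cpow_nonneg {c : ℂ} (hc : 0 < c.re) (Y : ℝ) :
    ∃ θ ∈ Ioc 0 (π / 6), ∀ u ∈ sector θ, 0 ≤ (c * u ^ (Y : ℂ)).re := by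
  have harg : |c.arg| < π / 2 := Complex.abs_arg_lt_pi_div_two_iff.2 (.inl hc)
  have hpos : 0 < (π / 2 - |c.arg|) / (|Y| + 1) := by
    have := sub_pos.2 harg
    positivity
  refine ⟨min (π / 6) ((π / 2 - |c.arg|) / (|Y| + 1)),
    ⟨lt_min (by positivity) hpos, min_le_left _ _⟩, fun u ⟨hu, hu_arg⟩ => ?_⟩
  rw [uIcc_of_le (le_min (by positivity) hpos.le)] at hu_arg
  have hu_le : |Y * u.arg| ≤ π / 2 - |c.arg| := by
    have h := (le_div_iff₀ (by positivity)).1 (hu_arg.2.trans (min_le_right _ _))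
    rw [abs_mul, abs_of_nonneg hu_arg.1]
    nlinarith [hu_arg.1]
  have hpolar : c * u ^ (Y : ℂ) =
      (‖c‖ * ‖u‖ ^ Y : ℝ) * Complex.exp ((c.arg + Y * u.arg : ℝ) * I) := by
    have hnorm : Complex.exp (Real.log ‖u‖ * Y) = (‖u‖ ^ Y : ℝ) := by
      rw [Real.rpow_def_of_pos (norm_pos_iff.2 hu)]; push_cast; rfl
    conv_lhs => rw [← Complex.norm_mul_exp_arg_mul_I c, Complex.cpow_def_of_ne_zero hu, Complex.log]
    rw [add_mul, Complex.exp_add, hnorm]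
    push_cast
    rw [add_mul, Complex.exp_add]
    ring_nf
  rw [hpolar, Complex.re_ofReal_mul, Complex.exp_ofReal_mul_I_re]
  have hsum : |c.arg + Y * u.arg| ≤ π / 2 := (abs_add_le _ _).trans (by linarith)
  exact mul_nonneg (by positivity) (Real.cos_nonneg_of_mem_Icc (abs_le.1 hsum))

end SectorGeometry

lemma rpow_mul_exp_neg_mul_le {s κ x : ℝ} (hs : 0 ≤ s) (hκ : 0 < κ) (hx : 0 ≤ x) :
    x ^ s * Real.exp (-(κ * x)) ≤ (s / κ) ^ s := by
  rcases hs.eq_or_lt with rfl | hs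
  · simpa using mul_nonneg hκ.le hx
  have hle : κ * x / s ≤ Real.exp (κ * x / s) :=
    (by linarith : κ * x / s ≤ κ * x / s + 1).trans (Real.add_one_le_exp _)
  have hpow : x ^ s * (κ / s) ^ s ≤ Real.exp (κ * x) := by
    calc x ^ s * (κ / s) ^ s = (κ * x / s) ^ s := by
          rw [← Real.mul_rpow hx (by positivity)]; ring_nf
      _ ≤ Real.exp (κ * x / s) ^ s := by gcongr
      _ = Real.exp (κ * x) := by rw [← Real.exp_mul, div_mul_cancel₀ _ hs.ne']
  have hinv : (s / κ) ^ s * (κ / s) ^ s = 1 := by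
    rw [← Real.mul_rpow (by positivity) (by positivity), div_mul_div_cancel₀ hκ.ne',
      div_self hs.ne', Real.one_rpow]
  rw [Real.exp_neg, ← div_eq_mul_inv, div_le_iff₀ (Real.exp_pos _)]
  calc x ^ s = (s / κ) ^ s * (x ^ s * (κ / s) ^ s) := by linear_combination -x ^ s * hinv
    _ ≤ (s / κ) ^ s * Real.exp (κ * x) := by gcongr

lemma rpow_mul_exp_neg_mul_le_rpow_neg_two {p κ x : ℝ} (hp : -2 ≤ p) (hκ : 0 < κ) (hx : 0 < x) :
    x ^ p * Real.exp (-(κ * x)) ≤ ((p + 2) / κ) ^ (p + 2) * x ^ (-2 : ℝ) := by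
  have hsplit : x ^ p = x ^ (p + 2) * x ^ (-2 : ℝ) := by
    rw [← Real.rpow_add hx]; ring_nf
  rw [hsplit, mul_right_comm]
  gcongr
  exact rpow_mul_exp_neg_mul_le (by linarith) hκ hx.le

lemma norm_exp_neg_sub_sum_le {w : ℂ} (hw : 0 ≤ w.re) (n : ℕ) :
    ‖Complex.exp (-w) - ∑ k ∈ Finset.range n, (-w) ^ k / k.factorial‖ ≤ 4 * ‖w‖ ^ n := by
  have he : Real.exp 1 < 3 := Real.exp_one_lt_three
  rcases le_total ‖w‖ 1 with hw1 | hw1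
  · calc ‖Complex.exp (-w) - ∑ k ∈ Finset.range n, (-w) ^ k / k.factorial‖
        ≤ ‖-w‖ ^ n * Real.exp ‖-w‖ := Complex.norm_exp_sub_sum_le_norm_mul_exp _ _
      _ ≤ ‖w‖ ^ n * Real.exp 1 := by rw [norm_neg]; gcongr
      _ ≤ 4 * ‖w‖ ^ n := by nlinarith [pow_nonneg (norm_nonneg w) n]
  have hsum : ‖∑ k ∈ Finset.range n, (-w) ^ k / k.factorial‖ ≤ ‖w‖ ^ n * Real.exp 1 := by
    calc ‖∑ k ∈ Finset.range n, (-w) ^ k / k.factorial‖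
        ≤ ∑ k ∈ Finset.range n, ‖w‖ ^ n * (1 ^ k / k.factorial) :=
          norm_sum_le_of_le _ fun k hk => by
            rw [norm_div, norm_pow, norm_neg, Complex.norm_natCast, one_pow, mul_one_div]
            gcongr
            exact (Finset.mem_range.1 hk).le
      _ ≤ ‖w‖ ^ n * Real.exp 1 := by
          rw [← Finset.mul_sum]
          gcongr
          exact Real.sum_le_exp_of_nonneg zero_le_one n
  have hexp : ‖Complex.exp (-w)‖ ≤ 1 := by simpa [Complex.norm_exp] using hw
  have hone : 1 ≤ ‖w‖ ^ n := one_le_pow₀ hw1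
  calc ‖Complex.exp (-w) - ∑ k ∈ Finset.range n, (-w) ^ k / k.factorial‖
      ≤ 1 + ‖w‖ ^ n * Real.exp 1 := (norm_sub_le _ _).trans (add_le_add hexp hsum)
    _ ≤ 4 * ‖w‖ ^ n := by nlinarith

/-! ### Gaussian-regularised oscillatory integrals -/

lemma ofReal_mul_exp_cpow {v α : ℝ} (hv : 0 < v) (hα : α ∈ Ioc (-π) π) (p : ℝ) :
    (v * Complex.exp (α * I)) ^ (p : ℂ) = (v ^ p : ℝ) * Complex.exp (p * α * I) := by
  have hlog : Complex.log (Real.exp (Real.log v) * Complex.exp (α * I)) = Real.log v + α * I := by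
    rw [Complex.ofReal_exp, ← Complex.exp_add, Complex.log_exp] <;> simp [hα.1, hα.2]
  rw [Real.exp_log hv] at hlog
  rw [Complex.cpow_def_of_ne_zero (by simp [hv.ne', Complex.exp_ne_zero]), hlog, add_mul,
    Complex.exp_add, Real.rpow_def_of_pos hv]
  push_cast
  ring_nf

lemma differentiableOn_cpow_const {θ : ℝ} (hθ : |θ| < π) (s : ℂ) :
    DifferentiableOn ℂ (fun u => u ^ s) (sector θ) := fun _ hu =>
  (differentiableAt_id.cpow_const (sector_subset_slitPlane hθ hu)).differentiableWithinAt

lemma norm_cpow_mul_exp_neg_le {δ p : ℝ} (hδ : |δ| ≤ π) {u : ℂ} (hu : u ∈ sector δ) :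
    ‖u ^ (p : ℂ) * Complex.exp (-u)‖ ≤ ‖u‖ ^ p * Real.exp (-(Real.cos δ * ‖u‖)) := by
  rw [norm_mul, Complex.norm_cpow_real, Complex.norm_exp, Complex.neg_re, mul_comm (Real.cos δ)]
  gcongr
  exact norm_mul_cos_le_re hδ hu

lemma integral_ray_cpow_mul_exp_neg {p δ : ℝ} (hp : -1 < p) (hδ : |δ| < π / 2) :
    Complex.exp (δ * I) * ∫ v in Ioi (0 : ℝ), (v * Complex.exp (δ * I)) ^ (p : ℂ) *
      Complex.exp (-(v * Complex.exp (δ * I))) = Real.Gamma (p + 1) := by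
  have hδπ : |δ| < π := hδ.trans (by linarith [Real.pi_pos])
  have hcos : 0 < Real.cos δ := Real.cos_pos_of_mem_Ioo (abs_lt.1 hδ)
  rw [← smul_eq_mul, ← integral_Ioi_eq_integral_ray
    (F := fun u => u ^ (p : ℂ) * Complex.exp (-u)) hδπ
    ((differentiableOn_cpow_const hδπ _).mul (by fun_prop)) hp (q := -2) (by norm_num)
    (M := 1) (N := ((p + 2) / Real.cos δ) ^ (p + 2)) (fun u hu => ?_) fun u hu => ?_]
  · have h := Complex.integral_cpow_mul_exp_neg_mul_Ioi (a := (p + 1 : ℝ)) (r := 1)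
      (by simpa using (by linarith : 0 < p + 1)) one_pos
    simpa [← Complex.Gamma_ofReal] using h
  · refine (norm_cpow_mul_exp_neg_le hδπ.le hu).trans ?_
    rw [mul_comm]
    gcongr
    simpa using mul_nonneg hcos.le (norm_nonneg u)
  · exact (norm_cpow_mul_exp_neg_le hδπ.le hu).trans
      (rpow_mul_exp_neg_mul_le_rpow_neg_two (by linarith) hcos (norm_pos_iff.2 hu.1))

theorem integral_ray_cpow_mul_exp_I_mul {p θ : ℝ} (hp : -1 < p) (hθ : θ ∈ Ioo 0 π) :
    Complex.exp (θ * I) * ∫ v in Ioi (0 : ℝ), (v * Complex.exp (θ * I)) ^ (p : ℂ) *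
      Complex.exp (I * (v * Complex.exp (θ * I))) =
    Complex.exp (π * (p + 1) / 2 * I) * Real.Gamma (p + 1) := by
  obtain ⟨δ, rfl⟩ : ∃ δ, θ = δ + π / 2 := ⟨θ - π / 2, by ring⟩
  obtain ⟨hδ0, hδπ⟩ := hθ
  have hturn : Complex.exp ((δ + π / 2 : ℝ) * I) = I * Complex.exp (δ * I) := by
    push_cast
    rw [add_mul, Complex.exp_add, Complex.exp_pi_div_two_mul_I, mul_comm]
  have hphase : Complex.exp (p * (δ + π / 2 : ℝ) * I) =
      Complex.exp (π * p / 2 * I) * Complex.exp (p * δ * I) := by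
    rw [← Complex.exp_add]
    push_cast
    ring_nf
  have hray : ∀ v ∈ Ioi (0 : ℝ), (v * Complex.exp ((δ + π / 2 : ℝ) * I)) ^ (p : ℂ) *
      Complex.exp (I * (v * Complex.exp ((δ + π / 2 : ℝ) * I))) = Complex.exp (π * p / 2 * I) *
        ((v * Complex.exp (δ * I)) ^ (p : ℂ) * Complex.exp (-(v * Complex.exp (δ * I)))) :=
    fun v hv => by
      have hexp : I * (v * Complex.exp ((δ + π / 2 : ℝ) * I)) = -(v * Complex.exp (δ * I)) := by
        rw [hturn]; linear_combination v * Complex.exp (δ * I) * Complex.I_mul_I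
      rw [hexp, ofReal_mul_exp_cpow hv ⟨by linarith, hδπ.le⟩,
        ofReal_mul_exp_cpow hv ⟨by linarith, by linarith⟩, hphase]
      ring
  have hI : Complex.exp (π * (p + 1) / 2 * I) = Complex.exp (π * p / 2 * I) * I := by
    rw [mul_add, mul_one, add_div, add_mul, Complex.exp_add, Complex.exp_pi_div_two_mul_I]
  rw [setIntegral_congr_fun measurableSet_Ioi hray, integral_const_mul, hI, hturn,
    ← integral_ray_cpow_mul_exp_neg hp (abs_lt.2 ⟨by linarith, by linarith⟩ : |δ| < π / 2)]
  ring

/-- The oscillation `e^{iu}`, regularised by the Gaussian factor `e^{-τu²/2}`. -/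
def oscGauss (τ : ℝ) (u : ℂ) : ℂ :=
  Complex.exp (I * u - τ / 2 * u ^ 2)

lemma differentiable_oscGauss (τ : ℝ) : Differentiable ℂ (oscGauss τ) := by
  unfold oscGauss
  fun_prop

lemma oscGauss_eq_mul (τ : ℝ) (u : ℂ) :
    oscGauss τ u = Complex.exp (I * u) * Complex.exp (-(τ / 2 * u ^ 2)) := by
  rw [oscGauss, sub_eq_add_neg, Complex.exp_add]

lemma norm_exp_I_mul (u : ℂ) : ‖Complex.exp (I * u)‖ = Real.exp (-u.im) := by
  simp [Complex.norm_exp]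

section RayIntegrals

variable {θ p M τ : ℝ} {G H : ℂ → ℂ}

lemma mul_exp_im (v θ : ℝ) : (v * Complex.exp (θ * I)).im = Real.sin θ * v := by
  rw [Complex.im_ofReal_mul, Complex.exp_ofReal_mul_I_im, mul_comm]

lemma norm_ray_le (hθ : |θ| < π) (hG : ∀ u ∈ sector θ, ‖G u‖ ≤ M * ‖u‖ ^ p * Real.exp (-u.im)) :
    ∀ v ∈ Ioi (0 : ℝ),
      ‖G (v * Complex.exp (θ * I))‖ ≤ M * (v ^ p * Real.exp (-(Real.sin θ * v))) := fun v hv => by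
  simpa only [norm_ofReal_mul_exp hv, mul_exp_im, mul_assoc]
    using hG _ (ofReal_mul_exp_mem_sector hθ right_mem_uIcc hv)

lemma integrableOn_rpow_mul_exp_neg_mul {s κ : ℝ} (hs : -1 < s) (hκ : 0 < κ) :
    IntegrableOn (fun v : ℝ => v ^ s * Real.exp (-(κ * v))) (Ioi 0) := by
  simpa using integrableOn_rpow_mul_exp_neg_mul_rpow hs zero_lt_one hκ

lemma integrableOn_ray (hp : -1 < p) (hθ : θ ∈ Ioo 0 π) (hG_cont : ContinuousOn G (sector θ))
    (hG : ∀ u ∈ sector θ, ‖G u‖ ≤ M * ‖u‖ ^ p * Real.exp (-u.im)) :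
    IntegrableOn (fun v : ℝ => G (v * Complex.exp (θ * I))) (Ioi 0) := by
  have hθ' : |θ| < π := by rw [abs_of_pos hθ.1]; exact hθ.2
  have hmeas : ContinuousOn (fun v : ℝ => G (v * Complex.exp (θ * I))) (Ioi 0) :=
    hG_cont.comp (by fun_prop) fun v hv => ofReal_mul_exp_mem_sector hθ' right_mem_uIcc hv
  exact ((integrableOn_rpow_mul_exp_neg_mul hp (Real.sin_pos_of_mem_Ioo hθ)).const_mul M).mono'
    (hmeas.aestronglyMeasurable measurableSet_Ioi)
    ((ae_restrict_mem measurableSet_Ioi).mono (norm_ray_le hθ' hG))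

lemma norm_integral_ray_le (hp : -1 < p) (hθ : θ ∈ Ioo 0 π)
    (hG : ∀ u ∈ sector θ, ‖G u‖ ≤ M * ‖u‖ ^ p * Real.exp (-u.im)) :
    ‖∫ v in Ioi (0 : ℝ), G (v * Complex.exp (θ * I))‖ ≤
      M * ((1 / Real.sin θ) ^ (p + 1) * Real.Gamma (p + 1)) := by
  have hθ' : |θ| < π := by rw [abs_of_pos hθ.1]; exact hθ.2
  have hsin := Real.sin_pos_of_mem_Ioo hθ
  refine (norm_integral_le_of_norm_le ((integrableOn_rpow_mul_exp_neg_mul hp hsin).const_mul M)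
    ((ae_restrict_mem measurableSet_Ioi).mono (norm_ray_le hθ' hG))).trans_eq ?_
  have hGamma := Real.integral_rpow_mul_exp_neg_mul_Ioi (by linarith : 0 < p + 1) hsin
  rw [add_sub_cancel_right] at hGamma
  rw [integral_const_mul, hGamma]

lemma norm_oscGauss_mul_le (hθ : θ ∈ Ioc 0 (π / 6)) (hτ : 0 ≤ τ)
    (hH : ∀ u ∈ sector θ, ‖H u‖ ≤ M * ‖u‖ ^ p) {u : ℂ} (hu : u ∈ sector θ) :
    ‖oscGauss τ u * H u‖ ≤ M * ‖u‖ ^ p * Real.exp (-u.im) * Real.exp (-(τ / 4 * ‖u‖ ^ 2)) := by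
  have hre : τ / 4 * ‖u‖ ^ 2 ≤ ((τ / 2 : ℝ) * u ^ 2).re := by
    rw [Complex.re_ofReal_mul]
    nlinarith [half_norm_sq_le_re_sq hθ hu]
  have hgauss : ‖Complex.exp (-(τ / 2 * u ^ 2))‖ ≤ Real.exp (-(τ / 4 * ‖u‖ ^ 2)) := by
    rw [Complex.norm_exp, Complex.neg_re]
    push_cast at hre
    gcongr
  calc ‖oscGauss τ u * H u‖
      = Real.exp (-u.im) * ‖Complex.exp (-(τ / 2 * u ^ 2))‖ * ‖H u‖ := by
        rw [oscGauss_eq_mul, norm_mul, norm_mul, norm_exp_I_mul]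
    _ ≤ Real.exp (-u.im) * Real.exp (-(τ / 4 * ‖u‖ ^ 2)) * (M * ‖u‖ ^ p) := by
        gcongr
        exact hH u hu
    _ = _ := by ring

lemma norm_oscGauss_mul_le_of_nonneg (hθ : θ ∈ Ioc 0 (π / 6)) (hτ : 0 ≤ τ)
    (hH : ∀ u ∈ sector θ, ‖H u‖ ≤ M * ‖u‖ ^ p) :
    ∀ u ∈ sector θ, ‖oscGauss τ u * H u‖ ≤ M * ‖u‖ ^ p * Real.exp (-u.im) := fun u hu => by
  have hM : 0 ≤ M * ‖u‖ ^ p := (norm_nonneg _).trans (hH u hu)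
  refine (norm_oscGauss_mul_le hθ hτ hH hu).trans (mul_le_of_le_one_right (by positivity) ?_)
  rw [Real.exp_le_one_iff, neg_nonpos]
  positivity

lemma norm_oscGauss_mul_le_rpow (hθ : θ ∈ Ioc 0 (π / 6)) (hτ : 0 ≤ τ)
    (hH : ∀ u ∈ sector θ, ‖H u‖ ≤ M * ‖u‖ ^ p) :
    ∀ u ∈ sector θ, ‖oscGauss τ u * H u‖ ≤ M * ‖u‖ ^ p := fun u hu =>
  (norm_oscGauss_mul_le_of_nonneg hθ hτ hH u hu).trans
    (mul_le_of_le_one_right ((norm_nonneg _).trans (hH u hu))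
      (by simpa using im_nonneg_of_mem_sector hθ.1.le hu))

lemma norm_oscGauss_mul_le_rpow_neg_four (hp : -4 ≤ p) (hθ : θ ∈ Ioc 0 (π / 6)) (hτ : 0 < τ)
    (hH : ∀ u ∈ sector θ, ‖H u‖ ≤ M * ‖u‖ ^ p) :
    ∀ u ∈ sector θ, ‖oscGauss τ u * H u‖ ≤
      M * ((p / 2 + 2) / (τ / 4)) ^ (p / 2 + 2) * ‖u‖ ^ (-4 : ℝ) := fun u hu => by
  have hr : 0 < ‖u‖ := norm_pos_iff.2 hu.1
  have hM : 0 ≤ M := nonneg_of_mul_nonneg_left ((norm_nonneg _).trans (hH u hu)) (by positivity)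
  have hsq : ∀ s : ℝ, (‖u‖ ^ 2) ^ s = ‖u‖ ^ (2 * s) := fun s => by
    rw [← Real.rpow_natCast, ← Real.rpow_mul hr.le]; norm_cast
  have hpow := rpow_mul_exp_neg_mul_le_rpow_neg_two (p := p / 2) (κ := τ / 4) (by linarith)
    (by positivity) (sq_pos_of_pos hr)
  rw [hsq, hsq, mul_div_cancel₀ p two_ne_zero, show 2 * (-2 : ℝ) = -4 by norm_num] at hpow
  have him : Real.exp (-u.im) ≤ 1 := by simpa using im_nonneg_of_mem_sector hθ.1.le hu
  calc ‖oscGauss τ u * H u‖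
      ≤ M * ‖u‖ ^ p * Real.exp (-u.im) * Real.exp (-(τ / 4 * ‖u‖ ^ 2)) :=
        norm_oscGauss_mul_le hθ hτ.le hH hu
    _ ≤ M * ‖u‖ ^ p * 1 * Real.exp (-(τ / 4 * ‖u‖ ^ 2)) := by gcongr
    _ = M * (‖u‖ ^ p * Real.exp (-(τ / 4 * ‖u‖ ^ 2))) := by ring
    _ ≤ M * (((p / 2 + 2) / (τ / 4)) ^ (p / 2 + 2) * ‖u‖ ^ (-4 : ℝ)) := by gcongr
    _ = _ := by ring

lemma integrableOn_oscGauss_mul (hp : -1 < p) (hθ : θ ∈ Ioc 0 (π / 6)) (hτ : 0 < τ)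
    (hH : ContinuousOn H (sector θ)) (hM : ∀ u ∈ sector θ, ‖H u‖ ≤ M * ‖u‖ ^ p) :
    IntegrableOn (fun v : ℝ => oscGauss τ v * H v) (Ioi 0) := by
  have hθπ : |θ| < π := by rw [abs_of_pos hθ.1]; linarith [hθ.2, Real.pi_pos]
  simpa using integrableOn_ray_of_norm_le_rpow (F := fun u => oscGauss τ u * H u) hθπ
    left_mem_uIcc ((differentiable_oscGauss τ).continuous.continuousOn.mul hH) hp
    (by norm_num : (-4 : ℝ) < -1) (norm_oscGauss_mul_le_rpow hθ hτ.le hM)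
    (norm_oscGauss_mul_le_rpow_neg_four (by linarith) hθ hτ hM)

lemma integral_oscGauss_mul_eq_ray (hp : -1 < p) (hθ : θ ∈ Ioc 0 (π / 6)) (hτ : 0 < τ)
    (hH : DifferentiableOn ℂ H (sector θ)) (hM : ∀ u ∈ sector θ, ‖H u‖ ≤ M * ‖u‖ ^ p) :
    ∫ v in Ioi (0 : ℝ), oscGauss τ v * H v = Complex.exp (θ * I) *
      ∫ v in Ioi (0 : ℝ), oscGauss τ (v * Complex.exp (θ * I)) * H (v * Complex.exp (θ * I)) :=
  integral_Ioi_eq_integral_ray (F := fun u => oscGauss τ u * H u)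
    (by rw [abs_of_pos hθ.1]; linarith [hθ.2, Real.pi_pos])
    ((differentiable_oscGauss τ).differentiableOn.mul hH) hp (by norm_num : (-4 : ℝ) < -1)
    (norm_oscGauss_mul_le_rpow hθ hτ.le hM)
    (norm_oscGauss_mul_le_rpow_neg_four (by linarith) hθ hτ hM)

/-- On the rotated path `e^{iu}` decays exponentially, so the bound is uniform in `τ`. -/
theorem norm_integral_oscGauss_mul_le (hp : -1 < p) (hθ : θ ∈ Ioc 0 (π / 6)) (hτ : 0 < τ)
    (hH : DifferentiableOn ℂ H (sector θ)) (hM : ∀ u ∈ sector θ, ‖H u‖ ≤ M * ‖u‖ ^ p) :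
    ‖∫ v in Ioi (0 : ℝ), oscGauss τ v * H v‖ ≤
      M * ((1 / Real.sin θ) ^ (p + 1) * Real.Gamma (p + 1)) := by
  rw [integral_oscGauss_mul_eq_ray hp hθ hτ hH hM, norm_mul, Complex.norm_exp_ofReal_mul_I,
    one_mul]
  exact norm_integral_ray_le (G := fun u => oscGauss τ u * H u) hp
    ⟨hθ.1, by linarith [hθ.2, Real.pi_pos]⟩ (norm_oscGauss_mul_le_of_nonneg hθ hτ.le hM)

end RayIntegrals

section Moments

variable {p τ : ℝ}

/-- The oscillatory moment `∫₀^∞ v^p e^{iv - τv²/2} dv`. -/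
def oscMoment (p τ : ℝ) : ℂ :=
  ∫ v in Ioi (0 : ℝ), oscGauss τ v * (v ^ p : ℝ)

lemma ofReal_rpow_eq_cpow {v : ℝ} (hv : v ∈ Ioi 0) (p : ℝ) : ((v ^ p : ℝ) : ℂ) = v ^ (p : ℂ) :=
  Complex.ofReal_cpow (le_of_lt hv) p

lemma pi_div_six_mem : π / 6 ∈ Ioc 0 (π / 6) :=
  ⟨by positivity, le_rfl⟩

lemma abs_pi_div_six_lt : |π / 6| < π := by
  rw [abs_of_pos (by positivity)]
  linarith [Real.pi_pos]

lemma integrableOn_oscGauss_mul_rpow (hp : -1 < p) (hτ : 0 < τ) :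
    IntegrableOn (fun v : ℝ => oscGauss τ v * (v ^ p : ℝ)) (Ioi 0) := by
  refine (integrableOn_oscGauss_mul (H := fun u => u ^ (p : ℂ)) (M := 1) hp pi_div_six_mem hτ
    (differentiableOn_cpow_const abs_pi_div_six_lt _).continuousOn fun u _ => ?_).congr_fun
    (fun v hv => ?_) measurableSet_Ioi
  · rw [Complex.norm_cpow_real, one_mul]
  · rw [ofReal_rpow_eq_cpow hv]

lemma oscMoment_eq_integral_cpow (p τ : ℝ) :
    oscMoment p τ = ∫ v in Ioi (0 : ℝ), oscGauss τ v * (v : ℂ) ^ (p : ℂ) :=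
  setIntegral_congr_fun measurableSet_Ioi fun v hv => by rw [ofReal_rpow_eq_cpow hv]

lemma cpow_add_two_mul {u : ℂ} (hu : u ≠ 0) (p : ℝ) (k : ℕ) :
    u ^ ((p + 2 * k : ℝ) : ℂ) = u ^ (p : ℂ) * (u ^ 2) ^ k := by
  push_cast
  rw [Complex.cpow_add _ _ hu, ← pow_mul]
  norm_cast

lemma exp_phase_add_two_mul (p : ℝ) (k : ℕ) :
    Complex.exp (π * ((p + 2 * k : ℝ) + 1) / 2 * I) =
      (-1) ^ k * Complex.exp (π * (p + 1) / 2 * I) := by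
  rw [← Complex.exp_pi_mul_I, ← Complex.exp_nat_mul, ← Complex.exp_add]
  push_cast
  ring_nf

lemma norm_oscGauss_mul_cpow_sub_sum_le {θ : ℝ} (hθ : θ ∈ Ioc 0 (π / 6)) (hτ : 0 ≤ τ) (p : ℝ)
    (n : ℕ) {u : ℂ} (hu : u ∈ sector θ) :
    ‖oscGauss τ u * u ^ (p : ℂ) - ∑ k ∈ Finset.range n, (-(τ / 2)) ^ k / k.factorial *
        (u ^ ((p + 2 * k : ℝ) : ℂ) * Complex.exp (I * u))‖ ≤
      4 * (τ / 2) ^ n * ‖u‖ ^ (p + 2 * n) * Real.exp (-u.im) := by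
  set w : ℂ := τ / 2 * u ^ 2 with hw
  have hw_re : 0 ≤ w.re := by
    have h : 0 ≤ ((τ / 2 : ℝ) * u ^ 2).re := by
      rw [Complex.re_ofReal_mul]
      exact mul_nonneg (by positivity)
        ((by positivity : 0 ≤ ‖u‖ ^ 2 / 2).trans (half_norm_sq_le_re_sq hθ hu))
    simpa [hw] using h
  have hfactor : oscGauss τ u * u ^ (p : ℂ) - ∑ k ∈ Finset.range n,
      (-(τ / 2)) ^ k / k.factorial * (u ^ ((p + 2 * k : ℝ) : ℂ) * Complex.exp (I * u)) =
      Complex.exp (I * u) * u ^ (p : ℂ) *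
        (Complex.exp (-w) - ∑ k ∈ Finset.range n, (-w) ^ k / k.factorial) := by
    rw [oscGauss_eq_mul, mul_sub, Finset.mul_sum]
    congr 1
    · ring
    · refine Finset.sum_congr rfl fun k _ => ?_
      rw [cpow_add_two_mul hu.1, hw, ← neg_mul, mul_pow]
      ring
  have hw_norm : ‖w‖ ^ n = (τ / 2) ^ n * ‖u‖ ^ (2 * n) := by
    rw [hw, norm_mul, norm_pow, mul_pow, pow_mul]
    simp [abs_of_nonneg hτ]
  have hpow : ‖u‖ ^ (p + 2 * n) = ‖u‖ ^ p * ‖u‖ ^ (2 * n) := by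
    rw [Real.rpow_add (norm_pos_iff.2 hu.1)]
    norm_cast
  rw [hfactor, norm_mul, norm_mul, norm_exp_I_mul, Complex.norm_cpow_real]
  calc Real.exp (-u.im) * ‖u‖ ^ p *
        ‖Complex.exp (-w) - ∑ k ∈ Finset.range n, (-w) ^ k / k.factorial‖
      ≤ Real.exp (-u.im) * ‖u‖ ^ p * (4 * ‖w‖ ^ n) := by
        gcongr
        exact norm_exp_neg_sub_sum_le hw_re n
    _ = _ := by rw [hw_norm, hpow]; ring

lemma integrableOn_ray_cpow_mul_exp (hp : -1 < p) {θ : ℝ} (hθ : θ ∈ Ioo 0 π) :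
    IntegrableOn (fun v : ℝ => (v * Complex.exp (θ * I)) ^ (p : ℂ) *
      Complex.exp (I * (v * Complex.exp (θ * I)))) (Ioi 0) :=
  integrableOn_ray (G := fun u => u ^ (p : ℂ) * Complex.exp (I * u)) (M := 1) hp hθ
    ((differentiableOn_cpow_const (by rw [abs_of_pos hθ.1]; exact hθ.2) _).continuousOn.mul
      (by fun_prop))
    fun u _ => by rw [norm_mul, Complex.norm_cpow_real, norm_exp_I_mul, one_mul]

lemma exp_mul_sum_Gamma_eq_ray (hp : -1 < p) {θ : ℝ} (hθ : θ ∈ Ioo 0 π) (τ : ℝ) (n : ℕ) :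
    Complex.exp (π * (p + 1) / 2 * I) *
        (∑ k ∈ Finset.range n, (τ / 2) ^ k / k.factorial * Real.Gamma (p + 2 * k + 1) : ℝ) =
      Complex.exp (θ * I) * ∑ k ∈ Finset.range n, ∫ v in Ioi (0 : ℝ), (-(τ / 2)) ^ k /
        k.factorial * ((v * Complex.exp (θ * I)) ^ ((p + 2 * k : ℝ) : ℂ) *
          Complex.exp (I * (v * Complex.exp (θ * I)))) := by
  rw [Complex.ofReal_sum, Finset.mul_sum, Finset.mul_sum]
  refine Finset.sum_congr rfl fun k _ => ?_
  rw [integral_const_mul, mul_left_comm (Complex.exp (θ * I)),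
    integral_ray_cpow_mul_exp_I_mul (by linarith [k.cast_nonneg (α := ℝ)]) hθ,
    exp_phase_add_two_mul, neg_pow]
  have hsign : (-1 : ℂ) ^ k * (-1) ^ k = 1 := by rw [← mul_pow]; norm_num
  push_cast
  linear_combination (-Complex.exp (π * (p + 1) / 2 * I) * (τ / 2) ^ k / k.factorial *
    Real.Gamma (p + 2 * k + 1)) * hsign

/-- Expand `e^{-τu²/2}` on the rotated path: each term is a Gamma integral. -/
theorem exists_norm_oscMoment_sub_le (hp : -1 < p) (n : ℕ) :
    ∃ K, ∀ τ > 0, ‖oscMoment p τ - Complex.exp (π * (p + 1) / 2 * I) *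
      (∑ k ∈ Finset.range n, (τ / 2) ^ k / k.factorial * Real.Gamma (p + 2 * k + 1) : ℝ)‖ ≤
        K * τ ^ n := by
  have hθ := pi_div_six_mem
  have hθ' : π / 6 ∈ Ioo 0 π := ⟨hθ.1, by linarith [Real.pi_pos]⟩
  have hpk : ∀ k : ℕ, -1 < p + 2 * k := fun k => by linarith [k.cast_nonneg (α := ℝ)]
  have hdiff := differentiableOn_cpow_const abs_pi_div_six_lt (p : ℂ)
  have hnorm : ∀ u ∈ sector (π / 6), ‖u ^ (p : ℂ)‖ ≤ 1 * ‖u‖ ^ p := fun u _ => by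
    rw [Complex.norm_cpow_real, one_mul]
  refine ⟨4 * (1 / 2) ^ n * ((1 / Real.sin (π / 6)) ^ (p + 2 * n + 1) *
    Real.Gamma (p + 2 * n + 1)), fun τ hτ => ?_⟩
  have hosc_int := integrableOn_ray (G := fun u => oscGauss τ u * u ^ (p : ℂ)) hp hθ'
    ((differentiable_oscGauss τ).continuous.continuousOn.mul hdiff.continuousOn)
    (norm_oscGauss_mul_le_of_nonneg hθ hτ.le hnorm)
  have hterm_int := fun (k : ℕ) (_ : k ∈ Finset.range n) =>
    (integrableOn_ray_cpow_mul_exp (hpk k) hθ').const_mul ((-(τ / 2)) ^ k / k.factorial : ℂ)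
  rw [exp_mul_sum_Gamma_eq_ray hp hθ', oscMoment_eq_integral_cpow,
    integral_oscGauss_mul_eq_ray hp hθ hτ hdiff hnorm, ← mul_sub, ← integral_finsetSum _ hterm_int,
    ← integral_sub hosc_int (integrable_finsetSum _ hterm_int), norm_mul,
    Complex.norm_exp_ofReal_mul_I, one_mul]
  refine (norm_integral_ray_le (hpk n) hθ'
    fun u hu => norm_oscGauss_mul_cpow_sub_sum_le hθ hτ.le p n hu).trans_eq ?_
  rw [div_pow, div_pow]
  ring

end Moments

section Remainder

variable {c : ℂ} {Y q : ℝ}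

/-- The second-order Taylor remainder of `w ↦ e^{-w}` at `0`. -/
def expRemainder (w : ℂ) : ℂ :=
  Complex.exp (-w) - 1 + w

lemma differentiable_expRemainder : Differentiable ℂ expRemainder := by
  unfold expRemainder
  fun_prop

lemma norm_expRemainder_le {w : ℂ} (hw : 0 ≤ w.re) : ‖expRemainder w‖ ≤ 4 * ‖w‖ ^ 2 := by
  have h := norm_exp_neg_sub_sum_le hw 2
  simp only [Finset.sum_range_succ, Finset.sum_range_zero, pow_zero, pow_one, Nat.factorial,
    zero_add, Nat.cast_one, div_one, mul_one] at h
  rwa [← sub_sub, sub_neg_eq_add] at h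

lemma expRemainder_conj (w : ℂ) :
    expRemainder (starRingEnd ℂ w) = starRingEnd ℂ (expRemainder w) := by
  simp [expRemainder, ← Complex.exp_conj]

lemma norm_cpow_mul_expRemainder_le {l : ℝ} (hl : 0 < l) {u : ℂ} (hu : u ≠ 0)
    (hre : 0 ≤ (c * u ^ (Y : ℂ)).re) :
    ‖u ^ (q : ℂ) * expRemainder (l * (c * u ^ (Y : ℂ)))‖ ≤
      4 * ‖c‖ ^ 2 * l ^ 2 * ‖u‖ ^ (q + 2 * Y) := by
  have hpow : ‖u‖ ^ (q + 2 * Y) = ‖u‖ ^ q * (‖u‖ ^ Y) ^ 2 := by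
    rw [Real.rpow_add (norm_pos_iff.2 hu), ← Real.rpow_mul_natCast (norm_nonneg u),
      Nat.cast_ofNat, mul_comm Y]
  have hrem := norm_expRemainder_le (w := l * (c * u ^ (Y : ℂ)))
    (by rw [Complex.re_ofReal_mul]; exact mul_nonneg hl.le hre)
  rw [norm_mul, norm_mul, Complex.norm_cpow_real, Complex.norm_real, Real.norm_of_nonneg hl.le]
    at hrem
  rw [norm_mul, Complex.norm_cpow_real, hpow]
  calc ‖u‖ ^ q * ‖expRemainder (l * (c * u ^ (Y : ℂ)))‖
      ≤ ‖u‖ ^ q * (4 * (l * (‖c‖ * ‖u‖ ^ Y)) ^ 2) := by gcongr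
    _ = _ := by ring

lemma exists_norm_integral_cpow_mul_expRemainder_le (hc : 0 < c.re) (hq : -1 < q + 2 * Y) :
    ∃ K, ∀ τ > (0 : ℝ), ∀ l > (0 : ℝ),
      IntegrableOn (fun v : ℝ => oscGauss τ v *
        (v ^ (q : ℂ) * expRemainder (l * (c * v ^ (Y : ℂ))))) (Ioi 0) ∧
      ‖∫ v in Ioi (0 : ℝ), oscGauss τ v * (v ^ (q : ℂ) * expRemainder (l * (c * v ^ (Y : ℂ))))‖ ≤
        K * l ^ 2 := by
  obtain ⟨θ, hθ, hre⟩ := exists_sector_re_mul_cpow_nonneg hc Y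
  have hθπ : |θ| < π := by rw [abs_of_pos hθ.1]; linarith [hθ.2, Real.pi_pos]
  have hdiff : ∀ l : ℝ, DifferentiableOn ℂ
      (fun u => u ^ (q : ℂ) * expRemainder (l * (c * u ^ (Y : ℂ)))) (sector θ) := fun l =>
    (differentiableOn_cpow_const hθπ _).mul (differentiable_expRemainder.comp_differentiableOn
      (((differentiableOn_cpow_const hθπ _).const_mul c).const_mul (l : ℂ)))
  refine ⟨4 * ‖c‖ ^ 2 * ((1 / Real.sin θ) ^ (q + 2 * Y + 1) * Real.Gamma (q + 2 * Y + 1)),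
    fun τ hτ l hl => ?_⟩
  have hbound := fun u hu => norm_cpow_mul_expRemainder_le (q := q) hl hu.1 (hre u hu)
  refine ⟨integrableOn_oscGauss_mul hq hθ hτ (hdiff l).continuousOn hbound,
    (norm_integral_oscGauss_mul_le hq hθ hτ (hdiff l) hbound).trans_eq (by ring)⟩

lemma ofReal_rpow_mul_re_expRemainder {v : ℝ} (hv : 0 < v) (l : ℝ) :
    ((v ^ q * (expRemainder (l * (c * (v ^ Y : ℝ)))).re : ℝ) : ℂ) =
      (v ^ (q : ℂ) * expRemainder (l * (c * v ^ (Y : ℂ))) +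
        v ^ (q : ℂ) * expRemainder (l * (starRingEnd ℂ c * v ^ (Y : ℂ)))) / 2 := by
  have hconj : starRingEnd ℂ (l * (c * (v ^ Y : ℝ))) = l * (starRingEnd ℂ c * (v ^ Y : ℝ)) := by
    simp only [map_mul, Complex.conj_ofReal]
  rw [Complex.ofReal_mul, Complex.re_eq_add_conj, ← expRemainder_conj, hconj,
    ofReal_rpow_eq_cpow hv, ofReal_rpow_eq_cpow hv]
  ring

/-- The real part is not holomorphic, but it is the average of the remainders for `c` and for its
conjugate, which are. -/
theorem exists_norm_integral_rpow_mul_re_expRemainder_le (hc : 0 < c.re) (hq : -1 < q + 2 * Y) :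
    ∃ K, ∀ τ > (0 : ℝ), ∀ l > (0 : ℝ),
      IntegrableOn (fun v : ℝ => oscGauss τ v *
        (v ^ q * (expRemainder (l * (c * (v ^ Y : ℝ)))).re : ℝ)) (Ioi 0) ∧
      ‖∫ v in Ioi (0 : ℝ), oscGauss τ v *
        (v ^ q * (expRemainder (l * (c * (v ^ Y : ℝ)))).re : ℝ)‖ ≤ K * l ^ 2 := by
  obtain ⟨K, hK⟩ := exists_norm_integral_cpow_mul_expRemainder_le hc hq
  obtain ⟨K', hK'⟩ := exists_norm_integral_cpow_mul_expRemainder_le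
    (c := starRingEnd ℂ c) (by rwa [Complex.conj_re]) hq
  refine ⟨(K + K') / 2, fun τ hτ l hl => ?_⟩
  obtain ⟨hint, hle⟩ := hK τ hτ l hl
  obtain ⟨hint', hle'⟩ := hK' τ hτ l hl
  have heq : EqOn (fun v : ℝ => (oscGauss τ v * (v ^ (q : ℂ) * expRemainder (l * (c * v ^ (Y : ℂ))))
      + oscGauss τ v * (v ^ (q : ℂ) * expRemainder (l * (starRingEnd ℂ c * v ^ (Y : ℂ))))) / 2)
      (fun v : ℝ => oscGauss τ v * (v ^ q * (expRemainder (l * (c * (v ^ Y : ℝ)))).re : ℝ))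
      (Ioi 0) := fun v hv => by
    simp only [ofReal_rpow_mul_re_expRemainder (mem_Ioi.1 hv)]
    ring
  refine ⟨IntegrableOn.congr_fun ((hint.add hint').div_const 2) heq measurableSet_Ioi, ?_⟩
  rw [← setIntegral_congr_fun measurableSet_Ioi heq, integral_div, integral_add hint hint',
    norm_div, Complex.norm_ofNat]
  linarith [norm_add_le_of_le hle hle']

end Remainder

/-! ### The transform of the truncated square -/

/-- Half the Fourier transform of `x ↦ x²` restricted to `[-1, 1]`, in angular frequency `v`. -/
def sqCosKernel (v : ℝ) : ℝ :=
  ∫ z in (0 : ℝ)..1, z ^ 2 * Real.cos (v * z)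

/-- The kernel `sqCosKernel` regularised by the Gaussian factor `e^{-τv²/2}`. -/
def gaussKernel (τ v : ℝ) : ℝ :=
  sqCosKernel v * Real.exp (-(τ / 2 * v ^ 2))

lemma abs_sqCosKernel_le_one (v : ℝ) : |sqCosKernel v| ≤ 1 := by
  have h := intervalIntegral.norm_integral_le_of_norm_le_const (a := 0) (b := 1) (C := 1)
    (f := fun z => z ^ 2 * Real.cos (v * z)) fun z hz => by
      rw [uIoc_of_le zero_le_one] at hz
      rw [norm_mul, Real.norm_eq_abs, Real.norm_eq_abs, abs_sq]
      exact mul_le_one₀ (pow_le_one₀ hz.1.le hz.2) (abs_nonneg _) (Real.abs_cos_le_one _)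
  simpa [sqCosKernel] using h

lemma sqCosKernel_neg (v : ℝ) : sqCosKernel (-v) = sqCosKernel v := by
  simp only [sqCosKernel, neg_mul, Real.cos_neg]

lemma continuous_sqCosKernel : Continuous sqCosKernel :=
  intervalIntegral.continuous_parametric_intervalIntegral_of_continuous' (by fun_prop) 0 1

lemma continuous_gaussKernel (τ : ℝ) : Continuous (gaussKernel τ) :=
  continuous_sqCosKernel.mul (by fun_prop)

lemma abs_gaussKernel_le (τ v : ℝ) : |gaussKernel τ v| ≤ Real.exp (-(τ / 2 * v ^ 2)) := by
  rw [gaussKernel, abs_mul, Real.abs_exp]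
  exact mul_le_of_le_one_left (Real.exp_nonneg _) (abs_sqCosKernel_le_one v)

lemma sqCosKernel_eq {v : ℝ} (hv : v ≠ 0) :
    sqCosKernel v = Real.sin v / v + 2 * Real.cos v / v ^ 2 - 2 * Real.sin v / v ^ 3 := by
  have hlin : ∀ z : ℝ, HasDerivAt (fun z => v * z) v z := fun z => by
    simpa using (hasDerivAt_id z).const_mul v
  have hderiv : ∀ z : ℝ, HasDerivAt (fun z => z ^ 2 * Real.sin (v * z) / v +
      2 * z * Real.cos (v * z) / v ^ 2 - 2 * Real.sin (v * z) / v ^ 3)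
      (z ^ 2 * Real.cos (v * z)) z := fun z => by
    refine HasDerivAt.congr_deriv ((((((hasDerivAt_id z).pow 2).mul (hlin z).sin).div_const v).add
      ((((hasDerivAt_id z).const_mul 2).mul (hlin z).cos).div_const (v ^ 2))).sub
      (((hlin z).sin.const_mul 2).div_const (v ^ 3))) ?_
    simp only [id, Pi.pow_apply]
    field_simp
    ring
  rw [sqCosKernel, intervalIntegral.integral_eq_sub_of_hasDerivAt (fun z _ => hderiv z)
    (by apply Continuous.intervalIntegrable; fun_prop)]
  simp

lemma hasDerivAt_sqCosKernel {v : ℝ} (hv : v ≠ 0) :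
    HasDerivAt sqCosKernel ((Real.cos v - 3 * sqCosKernel v) / v) v := by
  have hderiv := (((Real.hasDerivAt_sin v).div (hasDerivAt_id v) hv).add
    (((Real.hasDerivAt_cos v).const_mul 2).div (hasDerivAt_pow 2 v) (pow_ne_zero 2 hv))).sub
    (((Real.hasDerivAt_sin v).const_mul 2).div (hasDerivAt_pow 3 v) (pow_ne_zero 3 hv))
  refine (hderiv.congr_of_eventuallyEq ?_).congr_deriv ?_
  · filter_upwards [isOpen_ne.mem_nhds hv] with u hu using sqCosKernel_eq hu
  · rw [sqCosKernel_eq hv]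
    simp only [id]
    field_simp
    ring

lemma oscGauss_ofReal (τ v : ℝ) : oscGauss τ v =
    (Real.exp (-(τ / 2 * v ^ 2)) : ℝ) * (Real.cos v + Real.sin v * I : ℂ) := by
  rw [oscGauss_eq_mul, mul_comm I, Complex.exp_mul_I, mul_comm]
  push_cast
  rfl

lemma re_oscGauss_mul_ofReal (τ v a : ℝ) :
    (oscGauss τ v * a).re = Real.cos v * Real.exp (-(τ / 2 * v ^ 2)) * a := by
  rw [oscGauss_ofReal, Complex.re_mul_ofReal, Complex.re_ofReal_mul]
  simp [-Complex.ofReal_cos, -Complex.ofReal_sin, mul_comm]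

lemma im_oscGauss_mul_ofReal (τ v a : ℝ) :
    (oscGauss τ v * a).im = Real.sin v * Real.exp (-(τ / 2 * v ^ 2)) * a := by
  rw [oscGauss_ofReal, Complex.im_mul_ofReal, Complex.im_ofReal_mul]
  simp [-Complex.ofReal_cos, -Complex.ofReal_sin, mul_comm]

lemma rpow_mul_gaussKernel_mul {v : ℝ} (hv : 0 < v) (τ q a : ℝ) :
    v ^ (q + 3) * gaussKernel τ v * a = (oscGauss τ v * (v ^ (q + 2) * a : ℝ)).im +
      2 * (oscGauss τ v * (v ^ (q + 1) * a : ℝ)).re - 2 * (oscGauss τ v * (v ^ q * a : ℝ)).im := by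
  simp only [re_oscGauss_mul_ofReal, im_oscGauss_mul_ofReal, gaussKernel, sqCosKernel_eq hv.ne',
    Real.rpow_add hv, Real.rpow_one, Real.rpow_ofNat]
  field_simp

lemma integrableOn_and_integral_rpow_mul_gaussKernel {τ q : ℝ} {f : ℝ → ℝ}
    (hint₀ : IntegrableOn (fun v : ℝ => oscGauss τ v * (v ^ q * f v : ℝ)) (Ioi 0))
    (hint₁ : IntegrableOn (fun v : ℝ => oscGauss τ v * (v ^ (q + 1) * f v : ℝ)) (Ioi 0))
    (hint₂ : IntegrableOn (fun v : ℝ => oscGauss τ v * (v ^ (q + 2) * f v : ℝ)) (Ioi 0)) :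
    IntegrableOn (fun v => v ^ (q + 3) * gaussKernel τ v * f v) (Ioi 0) ∧
    ∫ v in Ioi 0, v ^ (q + 3) * gaussKernel τ v * f v =
      (∫ v in Ioi (0 : ℝ), oscGauss τ v * (v ^ (q + 2) * f v : ℝ)).im +
        2 * (∫ v in Ioi (0 : ℝ), oscGauss τ v * (v ^ (q + 1) * f v : ℝ)).re -
        2 * (∫ v in Ioi (0 : ℝ), oscGauss τ v * (v ^ q * f v : ℝ)).im := by
  have hsplit : EqOn (fun v => v ^ (q + 3) * gaussKernel τ v * f v) _ (Ioi 0) :=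
    fun v hv => rpow_mul_gaussKernel_mul hv τ q (f v)
  have h₀ : IntegrableOn (fun v : ℝ => 2 * (oscGauss τ v * (v ^ q * f v : ℝ)).im) (Ioi 0) :=
    hint₀.im.const_mul 2
  have h₁ : IntegrableOn (fun v : ℝ => 2 * (oscGauss τ v * (v ^ (q + 1) * f v : ℝ)).re) (Ioi 0) :=
    hint₁.re.const_mul 2
  have h₂ : IntegrableOn (fun v : ℝ => (oscGauss τ v * (v ^ (q + 2) * f v : ℝ)).im) (Ioi 0) :=
    hint₂.im
  have h₁₂ : IntegrableOn (fun v : ℝ => (oscGauss τ v * (v ^ (q + 2) * f v : ℝ)).im +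
      2 * (oscGauss τ v * (v ^ (q + 1) * f v : ℝ)).re) (Ioi 0) := h₂.add h₁
  refine ⟨IntegrableOn.congr_fun (h₁₂.sub h₀) hsplit.symm measurableSet_Ioi, ?_⟩
  rw [setIntegral_congr_fun measurableSet_Ioi hsplit, integral_sub h₁₂ h₀,
    integral_add h₂ h₁, integral_const_mul, integral_const_mul]
  exact congrArg₂ _ (congrArg₂ _ (integral_im hint₂) (congrArg _ (integral_re hint₁)))
    (congrArg _ (integral_im hint₀))

section FirstOrder

variable {p τ : ℝ}

lemma integrableOn_rpow_mul_exp_neg_half_mul_sq (hp : -1 < p) (hτ : 0 < τ) :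
    IntegrableOn (fun v => v ^ p * Real.exp (-(τ / 2 * v ^ 2))) (Ioi 0) := by
  simpa only [neg_mul] using integrableOn_rpow_mul_exp_neg_mul_sq (half_pos hτ) hp

lemma abs_rpow_mul_gaussKernel_le {v : ℝ} (hv : 0 ≤ v) (p τ : ℝ) :
    |v ^ p * gaussKernel τ v| ≤ v ^ p * Real.exp (-(τ / 2 * v ^ 2)) := by
  rw [abs_mul, abs_of_nonneg (by positivity)]
  gcongr
  exact abs_gaussKernel_le τ v

lemma integrableOn_rpow_mul_gaussKernel (hp : -1 < p) (hτ : 0 < τ) :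
    IntegrableOn (fun v => v ^ p * gaussKernel τ v) (Ioi 0) := by
  have hcont : ContinuousOn (fun v : ℝ => v ^ p * gaussKernel τ v) (Ioi 0) :=
    (continuousOn_id.rpow_const fun v hv => .inl (ne_of_gt hv)).mul
      (continuous_gaussKernel τ).continuousOn
  exact (integrableOn_rpow_mul_exp_neg_half_mul_sq hp hτ).mono'
    (hcont.aestronglyMeasurable measurableSet_Ioi)
    ((ae_restrict_mem measurableSet_Ioi).mono fun v hv =>
      abs_rpow_mul_gaussKernel_le (mem_Ioi.1 hv).le p τ)

lemma tendsto_rpow_mul_gaussKernel_atTop (p : ℝ) (hτ : 0 < τ) :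
    Tendsto (fun v => v ^ p * gaussKernel τ v) atTop (𝓝 0) := by
  have hexp : Tendsto (fun v : ℝ => Real.exp (-(1 / 2) * v)) atTop (𝓝 0) :=
    Real.tendsto_exp_atBot.comp (tendsto_id.const_mul_atTop_of_neg (by norm_num))
  have hlim := (rpow_mul_exp_neg_mul_sq_isLittleO_exp_neg (half_pos hτ) p).trans_tendsto hexp
  simp only [neg_mul] at hlim
  exact squeeze_zero_norm' ((eventually_ge_atTop 0).mono fun v hv =>
    abs_rpow_mul_gaussKernel_le hv p τ) hlim

lemma hasDerivAt_rpow_mul_gaussKernel {v : ℝ} (hv : 0 < v) (p τ : ℝ) :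
    HasDerivAt (fun v => v ^ (p + 1) * gaussKernel τ v)
      ((p - 2) * (v ^ p * gaussKernel τ v) + (oscGauss τ v * (v ^ p : ℝ)).re -
        τ * (v ^ (p + 2) * gaussKernel τ v)) v := by
  have hgauss : HasDerivAt (fun v => Real.exp (-(τ / 2 * v ^ 2)))
      (Real.exp (-(τ / 2 * v ^ 2)) * -(τ * v)) v :=
    ((hasDerivAt_pow 2 v).const_mul (τ / 2)).fun_neg.exp.congr_deriv (by ring_nf)
  refine ((Real.hasDerivAt_rpow_const (p := p + 1) (.inl hv.ne')).fun_mul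
    ((hasDerivAt_sqCosKernel hv.ne').fun_mul hgauss)).congr_deriv ?_
  rw [re_oscGauss_mul_ofReal, gaussKernel, add_sub_cancel_right, Real.rpow_add hv,
    Real.rpow_add hv, Real.rpow_one, Real.rpow_ofNat]
  field_simp
  ring

/-- Integrate the derivative of `v^{p+1} k(v) e^{-τv²/2}`, using `v k'(v) = cos v - 3k(v)`. -/
lemma two_sub_mul_integral_rpow_mul_gaussKernel (hp : -1 < p) (hτ : 0 < τ) :
    (2 - p) * ∫ v in Ioi 0, v ^ p * gaussKernel τ v =
      (oscMoment p τ).re - τ * ∫ v in Ioi 0, v ^ (p + 2) * gaussKernel τ v := by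
  have hint := (integrableOn_rpow_mul_gaussKernel hp hτ).const_mul (p - 2)
  have hint₂ := (integrableOn_rpow_mul_gaussKernel (p := p + 2) (by linarith) hτ).const_mul τ
  have hosc := integrableOn_oscGauss_mul_rpow hp hτ
  have hre : IntegrableOn (fun v : ℝ => (oscGauss τ v * (v ^ p : ℝ)).re) (Ioi 0) := hosc.re
  have hadd : IntegrableOn (fun v : ℝ => (p - 2) * (v ^ p * gaussKernel τ v) +
      (oscGauss τ v * (v ^ p : ℝ)).re) (Ioi 0) := hint.add hre
  have hcont : Continuous fun v : ℝ => v ^ (p + 1) * gaussKernel τ v :=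
    (Real.continuous_rpow_const (by linarith)).mul (continuous_gaussKernel τ)
  have hftc := integral_Ioi_of_hasDerivAt_of_tendsto hcont.continuousWithinAt
    (fun v hv => hasDerivAt_rpow_mul_gaussKernel hv p τ) (hadd.sub hint₂)
    (tendsto_rpow_mul_gaussKernel_atTop (p + 1) hτ)
  have hmoment : ∫ v in Ioi (0 : ℝ), (oscGauss τ v * (v ^ p : ℝ)).re = (oscMoment p τ).re :=
    integral_re hosc
  rw [integral_sub hadd hint₂, integral_add hint hre, hmoment, integral_const_mul,
    integral_const_mul, Real.zero_rpow (by linarith)] at hftc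
  linarith

lemma integral_rpow_add_two_mul_gaussKernel (hp : 0 < p) (hτ : 0 < τ) :
    ∫ v in Ioi 0, v ^ (p + 2) * gaussKernel τ v =
      (oscMoment (p + 1) τ).im + 2 * (oscMoment p τ).re - 2 * (oscMoment (p - 1) τ).im := by
  have h := (integrableOn_and_integral_rpow_mul_gaussKernel (τ := τ) (q := p - 1) (f := fun _ => 1)
    ?_ ?_ ?_).2
  · simpa only [mul_one, oscMoment, sub_add_cancel, show p - 1 + 2 = p + 1 by ring,
      show p - 1 + 3 = p + 2 by ring] using h
  all_goals
    simp only [mul_one]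
    exact integrableOn_oscGauss_mul_rpow (by linarith) hτ

lemma exists_abs_re_oscMoment_add_le (hp : -1 < p) (n : ℕ) :
    ∃ K, ∀ τ > 0, |(oscMoment p τ).re + Real.sin (π * p / 2) *
      ∑ k ∈ Finset.range n, (τ / 2) ^ k / k.factorial * Real.Gamma (p + 2 * k + 1)| ≤
        K * τ ^ n := by
  obtain ⟨K, hK⟩ := exists_norm_oscMoment_sub_le hp n
  have hphase : (Complex.exp (π * (p + 1) / 2 * I)).re = -Real.sin (π * p / 2) := by
    rw [← Real.cos_add_pi_div_two, ← Complex.exp_ofReal_mul_I_re]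
    push_cast
    ring_nf
  refine ⟨K, fun τ hτ => (Complex.abs_re_le_norm _).trans (hK τ hτ) |>.trans_eq' ?_⟩
  rw [Complex.sub_re, Complex.re_mul_ofReal, hphase, neg_mul, sub_neg_eq_add]

lemma exists_abs_im_oscMoment_sub_le (hp : -1 < p) (n : ℕ) :
    ∃ K, ∀ τ > 0, |(oscMoment p τ).im - Real.cos (π * p / 2) *
      ∑ k ∈ Finset.range n, (τ / 2) ^ k / k.factorial * Real.Gamma (p + 2 * k + 1)| ≤
        K * τ ^ n := by
  obtain ⟨K, hK⟩ := exists_norm_oscMoment_sub_le hp n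
  have hphase : (Complex.exp (π * (p + 1) / 2 * I)).im = Real.cos (π * p / 2) := by
    rw [← Real.sin_add_pi_div_two, ← Complex.exp_ofReal_mul_I_im]
    push_cast
    ring_nf
  refine ⟨K, fun τ hτ => (Complex.abs_im_le_norm _).trans (hK τ hτ) |>.trans_eq' ?_⟩
  rw [Complex.sub_im, Complex.im_mul_ofReal, hphase]

lemma exists_abs_integral_rpow_add_two_mul_gaussKernel_add_le (hp : 0 < p) :
    ∃ K, ∀ τ > 0, |(∫ v in Ioi 0, v ^ (p + 2) * gaussKernel τ v) + Real.sin (π * p / 2) *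
      (Real.Gamma (p + 2) + 2 * Real.Gamma (p + 1) + 2 * Real.Gamma p)| ≤ K * τ := by
  obtain ⟨K₁, hK₁⟩ := exists_abs_im_oscMoment_sub_le (p := p + 1) (by linarith) 1
  obtain ⟨K₂, hK₂⟩ := exists_abs_re_oscMoment_add_le (p := p) (by linarith) 1
  obtain ⟨K₃, hK₃⟩ := exists_abs_im_oscMoment_sub_le (p := p - 1) (by linarith) 1
  refine ⟨K₁ + 2 * K₂ + 2 * K₃, fun τ hτ => ?_⟩
  have hcos₁ : Real.cos (π * (p + 1) / 2) = -Real.sin (π * p / 2) := by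
    rw [← Real.cos_add_pi_div_two]; ring_nf
  have hcos₃ : Real.cos (π * (p - 1) / 2) = Real.sin (π * p / 2) := by
    rw [← Real.cos_sub_pi_div_two]; ring_nf
  have h₁ := hK₁ τ hτ
  have h₂ := hK₂ τ hτ
  have h₃ := hK₃ τ hτ
  simp only [Finset.sum_range_one, pow_zero, Nat.factorial_zero, Nat.cast_one, div_one, one_mul,
    CharP.cast_eq_zero, mul_zero, add_zero, pow_one, sub_add_cancel, hcos₁, hcos₃] at h₁ h₂ h₃
  rw [show p + 1 + 1 = p + 2 by ring] at h₁
  rw [integral_rpow_add_two_mul_gaussKernel hp hτ]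
  rw [abs_le] at h₁ h₂ h₃ ⊢
  constructor <;> linarith

theorem exists_abs_integral_rpow_mul_gaussKernel_add_le (hp : 0 < p) (hp2 : p < 2) :
    ∃ K, ∀ τ > 0, |(∫ v in Ioi 0, v ^ p * gaussKernel τ v) + Real.Gamma (p + 1) *
      Real.sin (π * p / 2) * (1 / (2 - p) - τ * ((p + 1) * (p + 2) / (2 * p)))| ≤ K * τ ^ 2 := by
  obtain ⟨K₁, hK₁⟩ := exists_abs_re_oscMoment_add_le (p := p) (by linarith) 2
  obtain ⟨K₂, hK₂⟩ := exists_abs_integral_rpow_add_two_mul_gaussKernel_add_le hp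
  refine ⟨(K₁ + K₂) / (2 - p), fun τ hτ => ?_⟩
  have h₁ := hK₁ τ hτ
  have h₂ := hK₂ τ hτ
  have hΓ₁ : Real.Gamma (p + 1) = p * Real.Gamma p := Real.Gamma_add_one hp.ne'
  have hΓ₂ : Real.Gamma (p + 2) = (p + 1) * (p * Real.Gamma p) := by
    rw [← hΓ₁, ← Real.Gamma_add_one (by linarith)]; ring_nf
  have hΓ₃ : Real.Gamma (p + 2 + 1) = (p + 2) * ((p + 1) * (p * Real.Gamma p)) := by
    rw [← hΓ₂, ← Real.Gamma_add_one (by linarith)]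
  simp only [Finset.sum_range_succ, Finset.sum_range_zero, pow_zero, pow_one, Nat.factorial,
    Nat.cast_zero, Nat.cast_one, div_one, one_mul, mul_zero, mul_one, add_zero, zero_add,
    hΓ₁, hΓ₂, hΓ₃] at h₁ h₂ ⊢
  have hrec := two_sub_mul_integral_rpow_mul_gaussKernel (p := p) (by linarith) hτ
  set J := ∫ v in Ioi 0, v ^ p * gaussKernel τ v
  set J₂ := ∫ v in Ioi 0, v ^ (p + 2) * gaussKernel τ v
  set S := Real.sin (π * p / 2)
  have hsplit : (2 - p) * (J + p * Real.Gamma p * S *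
      (1 / (2 - p) - τ * ((p + 1) * (p + 2) / (2 * p)))) =
      ((oscMoment p τ).re + S * (p * Real.Gamma p +
        τ / 2 * ((p + 2) * ((p + 1) * (p * Real.Gamma p))))) -
      τ * (J₂ + S * ((p + 1) * (p * Real.Gamma p) + 2 * (p * Real.Gamma p) +
        2 * Real.Gamma p)) := by
    have hp2' : 2 - p ≠ 0 := by linarith
    rw [mul_add, hrec]
    field_simp
    ring
  have h2p : 0 < 2 - p := by linarith
  rw [div_mul_eq_mul_div, le_div_iff₀' h2p, ← abs_of_pos h2p, ← abs_mul, abs_of_pos h2p, hsplit]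
  refine (abs_sub _ _).trans ?_
  rw [abs_mul, abs_of_pos hτ]
  nlinarith

end FirstOrder

section StableFactor

variable {c : ℂ} {Y : ℝ}

lemma exists_abs_integral_gaussKernel_mul_expRemainder_le (hc : 0 < c.re) (hY : 1 < Y) :
    ∃ K, ∀ τ > (0 : ℝ), ∀ l > (0 : ℝ),
      IntegrableOn (fun v => gaussKernel τ v * (expRemainder (l * (c * (v ^ Y : ℝ)))).re) (Ioi 0) ∧
      |∫ v in Ioi 0, gaussKernel τ v * (expRemainder (l * (c * (v ^ Y : ℝ)))).re| ≤ K * l ^ 2 := by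
  obtain ⟨K₁, hK₁⟩ := exists_norm_integral_rpow_mul_re_expRemainder_le (Y := Y)
    (q := -3 + 2) hc (by linarith)
  obtain ⟨K₂, hK₂⟩ := exists_norm_integral_rpow_mul_re_expRemainder_le (Y := Y)
    (q := -3 + 1) hc (by linarith)
  obtain ⟨K₃, hK₃⟩ := exists_norm_integral_rpow_mul_re_expRemainder_le (Y := Y)
    (q := -3) hc (by linarith)
  refine ⟨K₁ + 2 * K₂ + 2 * K₃, fun τ hτ l hl => ?_⟩
  obtain ⟨hint₁, hle₁⟩ := hK₁ τ hτ l hl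
  obtain ⟨hint₂, hle₂⟩ := hK₂ τ hτ l hl
  obtain ⟨hint₃, hle₃⟩ := hK₃ τ hτ l hl
  have h := integrableOn_and_integral_rpow_mul_gaussKernel hint₃ hint₂ hint₁
  simp only [neg_add_cancel, Real.rpow_zero, one_mul] at h
  refine ⟨h.1, ?_⟩
  rw [h.2]
  have h₁ := abs_le.1 ((Complex.abs_im_le_norm _).trans hle₁)
  have h₂ := abs_le.1 ((Complex.abs_re_le_norm _).trans hle₂)
  have h₃ := abs_le.1 ((Complex.abs_im_le_norm _).trans hle₃)
  rw [abs_le]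
  constructor <;> linarith

lemma re_exp_neg_sub_one_eq (l x : ℝ) (c : ℂ) :
    (Complex.exp (-(l * (c * x)))).re - 1 =
      (expRemainder (l * (c * x))).re - l * c.re * x := by
  simp only [expRemainder, Complex.add_re, Complex.sub_re, Complex.one_re, Complex.re_ofReal_mul,
    Complex.re_mul_ofReal]
  ring

theorem exists_abs_integral_gaussKernel_mul_re_exp_sub_le (hc : 0 < c.re) (hY1 : 1 < Y)
    (hY2 : Y < 2) :
    ∃ K, ∀ τ > (0 : ℝ), ∀ l > (0 : ℝ),
      |(∫ v in Ioi 0, gaussKernel τ v * ((Complex.exp (-(l * (c * (v ^ Y : ℝ))))).re - 1)) -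
        l * (c.re * Real.Gamma (Y + 1) * Real.sin (π * Y / 2)) *
          (1 / (2 - Y) - τ * ((Y + 1) * (Y + 2) / (2 * Y)))| ≤ K * (l * τ ^ 2 + l ^ 2) := by
  obtain ⟨K₁, hK₁⟩ := exists_abs_integral_gaussKernel_mul_expRemainder_le hc hY1
  obtain ⟨K₂, hK₂⟩ := exists_abs_integral_rpow_mul_gaussKernel_add_le (by linarith : 0 < Y) hY2
  refine ⟨|K₁| + c.re * |K₂|, fun τ hτ l hl => ?_⟩
  obtain ⟨hint, hle⟩ := hK₁ τ hτ l hl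
  have hlin := (integrableOn_rpow_mul_gaussKernel (by linarith : -1 < Y) hτ).const_mul (l * c.re)
  have hsplit : ∀ v : ℝ, gaussKernel τ v * ((Complex.exp (-(l * (c * (v ^ Y : ℝ))))).re - 1) =
      gaussKernel τ v * (expRemainder (l * (c * (v ^ Y : ℝ)))).re -
        l * c.re * (v ^ Y * gaussKernel τ v) := fun v => by
    rw [re_exp_neg_sub_one_eq]; ring
  simp only [hsplit]
  rw [integral_sub hint hlin, integral_const_mul]
  set E := ∫ v in Ioi 0, gaussKernel τ v * (expRemainder (l * (c * (v ^ Y : ℝ)))).re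
  set J := ∫ v in Ioi 0, v ^ Y * gaussKernel τ v
  set B := 1 / (2 - Y) - τ * ((Y + 1) * (Y + 2) / (2 * Y))
  calc |E - l * c.re * J - l * (c.re * Real.Gamma (Y + 1) * Real.sin (π * Y / 2)) * B|
      = |E - l * c.re * (J + Real.Gamma (Y + 1) * Real.sin (π * Y / 2) * B)| := by ring_nf
    _ ≤ |E| + l * c.re * |J + Real.Gamma (Y + 1) * Real.sin (π * Y / 2) * B| := by
        refine (abs_sub _ _).trans_eq ?_
        rw [abs_mul, abs_of_pos (mul_pos hl hc)]
    _ ≤ |K₁| * l ^ 2 + l * c.re * (|K₂| * τ ^ 2) := by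
        gcongr
        · exact hle.trans (by gcongr; exact le_abs_self _)
        · exact (hK₂ τ hτ).trans (by gcongr; exact le_abs_self _)
    _ ≤ (|K₁| + c.re * |K₂|) * (l * τ ^ 2 + l ^ 2) := by
        have h₁ : 0 ≤ |K₁| * (l * τ ^ 2) := by positivity
        have h₂ : 0 ≤ c.re * |K₂| * l ^ 2 := by positivity
        linarith

end StableFactor

/-! ### The stable exponent -/

section StableExponent

variable {Y Cp Cm : ℝ}

lemma stablePart_of_pos {u : ℝ} (hu : 0 < u) :
    stablePart Y Cp Cm u = stablePart Y Cp Cm 1 * (u ^ Y : ℝ) := by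
  simp only [stablePart, abs_of_pos hu, abs_one, Real.one_rpow, Real.sign_of_pos hu,
    Real.sign_of_pos one_pos]
  push_cast
  ring

lemma Gamma_neg_pos (hY1 : 1 < Y) (hY2 : Y < 2) : 0 < Real.Gamma (-Y) := by
  have hΓ₁ : Real.Gamma (-Y + 1) = -Y * Real.Gamma (-Y) := Real.Gamma_add_one (by linarith)
  have hΓ₂ : Real.Gamma (-Y + 1 + 1) = (-Y + 1) * Real.Gamma (-Y + 1) :=
    Real.Gamma_add_one (by linarith)
  have hpos : 0 < Real.Gamma (-Y + 1 + 1) := Real.Gamma_pos_of_pos (by linarith)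
  rw [hΓ₂, hΓ₁, ← mul_assoc] at hpos
  exact pos_of_mul_pos_right hpos (by nlinarith)

lemma cos_pi_mul_div_two_neg (hY1 : 1 < Y) (hY2 : Y < 2) : Real.cos (π * Y / 2) < 0 :=
  Real.cos_neg_of_pi_div_two_lt_of_lt (by nlinarith [Real.pi_pos]) (by nlinarith [Real.pi_pos])

lemma sin_pi_mul_div_two_pos (hY0 : 0 < Y) (hY2 : Y < 2) : 0 < Real.sin (π * Y / 2) :=
  Real.sin_pos_of_pos_of_lt_pi (by positivity) (by nlinarith [Real.pi_pos])

lemma re_stablePart (u : ℝ) : (stablePart Y Cp Cm u).re = varsigma Y Cp Cm ^ Y * |u| ^ Y := by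
  have hreal : ((Cp - Cm) / (Cp + Cm) : ℂ) = ((Cp - Cm) / (Cp + Cm) : ℝ) := by push_cast; rfl
  rw [stablePart, Complex.re_ofReal_mul, hreal, Complex.sub_re, Complex.re_mul_ofReal,
    Complex.re_mul_ofReal, Complex.re_mul_ofReal]
  simp

lemma re_stablePart_one (hY1 : 1 < Y) (hY2 : Y < 2) (hC : 0 ≤ Cp + Cm) :
    (stablePart Y Cp Cm 1).re = (Cp + Cm) * Real.Gamma (-Y) * |Real.cos (π * Y / 2)| := by
  have hΓ := (Gamma_neg_pos hY1 hY2).le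
  rw [re_stablePart, abs_one, Real.one_rpow, mul_one, varsigma, ← Real.rpow_mul (by positivity),
    one_div_mul_cancel (by linarith), Real.rpow_one]

lemma re_stablePart_one_pos (hY1 : 1 < Y) (hY2 : Y < 2) (hC : 0 < Cp + Cm) :
    0 < (stablePart Y Cp Cm 1).re := by
  have hΓ := Gamma_neg_pos hY1 hY2
  have hcos := (cos_pi_mul_div_two_neg hY1 hY2).ne
  rw [re_stablePart_one hY1 hY2 hC.le]
  positivity

lemma two_div_pi_mul_re_stablePart_one (hY1 : 1 < Y) (hY2 : Y < 2) (hC : 0 ≤ Cp + Cm) :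
    2 / π * ((stablePart Y Cp Cm 1).re * Real.Gamma (Y + 1) * Real.sin (π * Y / 2)) = Cp + Cm := by
  have hcos := cos_pi_mul_div_two_neg hY1 hY2
  have hsin := sin_pi_mul_div_two_pos (zero_lt_one.trans hY1) hY2
  have hreflect : Real.Gamma (-Y) * Real.Gamma (Y + 1) =
      π / -(2 * Real.sin (π * Y / 2) * Real.cos (π * Y / 2)) := by
    rw [← Real.sin_two_mul, ← Real.sin_neg, mul_div_cancel₀ _ two_ne_zero, ← mul_neg,
      ← Real.Gamma_mul_Gamma_one_sub, sub_neg_eq_add, add_comm Y]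
  rw [re_stablePart_one hY1 hY2 hC, abs_of_neg hcos]
  calc 2 / π * ((Cp + Cm) * Real.Gamma (-Y) * -Real.cos (π * Y / 2) * Real.Gamma (Y + 1) *
        Real.sin (π * Y / 2))
      = 2 / π * (Cp + Cm) * -Real.cos (π * Y / 2) * Real.sin (π * Y / 2) *
        (Real.Gamma (-Y) * Real.Gamma (Y + 1)) := by ring
    _ = Cp + Cm := by
        rw [hreflect]
        field_simp [hcos.ne, hsin.ne', Real.pi_ne_zero]

end StableExponent

/-! ### Truncated moments from characteristic functions -/

section CharFun

open scoped FourierTransform SchwartzMap ContDiff RealInnerProductSpace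
open Metric (closedBall)

variable {V : Type*} [NormedAddCommGroup V] [InnerProductSpace ℝ V] [FiniteDimensional ℝ V]

lemma exists_schwartzMap_tendsto_indicator_closedBall {f : V → ℂ} (hf : ContDiff ℝ ∞ f) {r : ℝ}
    (hr : 0 < r) : ∃ g : ℕ → 𝓢(V, ℂ),
      (∀ n x, ‖g n x‖ ≤ (closedBall 0 (r + 1)).indicator (fun x => ‖f x‖) x) ∧
      ∀ x, Tendsto (fun n => g n x) atTop (𝓝 ((closedBall 0 r).indicator f x)) := by
  let φ : ℕ → ContDiffBump (0 : V) := fun n =>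
    ⟨r, r + 1 / (n + 1), hr, lt_add_of_pos_right r Nat.one_div_pos_of_nat⟩
  have hφ_zero : ∀ (n : ℕ) {x : V}, r + 1 / ((n : ℝ) + 1) ≤ ‖x‖ → φ n x = 0 := fun n x hx =>
    (φ n).zero_of_le_dist (by simpa [φ] using hx)
  have hsupport : ∀ n, HasCompactSupport fun x => φ n x • f x := fun n =>
    (φ n).hasCompactSupport.smul_right
  refine ⟨fun n => (hsupport n).toSchwartzMap ((φ n).contDiff.smul hf), fun n x => ?_, fun x => ?_⟩
  · change ‖φ n x • f x‖ ≤ _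
    by_cases hx : x ∈ closedBall 0 (r + 1)
    · rw [indicator_of_mem hx, norm_smul, Real.norm_eq_abs, abs_of_nonneg (φ n).nonneg]
      exact mul_le_of_le_one_left (norm_nonneg _) (φ n).le_one
    · rw [mem_closedBall_zero_iff, not_le] at hx
      have hle : 1 / ((n : ℝ) + 1) ≤ 1 := by simpa using Nat.one_div_le_one_div (α := ℝ) n.zero_le
      simp [hφ_zero n (x := x) (by linarith), indicator_nonneg]
  · change Tendsto (fun n => φ n x • f x) atTop _
    refine tendsto_const_nhds.congr' ?_
    by_cases hx : x ∈ closedBall 0 r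
    · refine Eventually.of_forall fun n => ?_
      dsimp only
      rw [indicator_of_mem hx, (φ n).one_of_mem_closedBall hx, one_smul]
    · have hx' : 0 < ‖x‖ - r := by simpa using hx
      filter_upwards [tendsto_one_div_add_atTop_nhds_zero_nat.eventually_lt_const hx'] with n hn
      rw [indicator_of_notMem hx, hφ_zero n (by linarith), zero_smul]

variable [MeasurableSpace V] [BorelSpace V]

lemma integral_schwartzMap_eq_integral_fourier_mul_charFun (μ : Measure V) [IsFiniteMeasure μ]
    (g : 𝓢(V, ℂ)) : ∫ x, g x ∂μ = ∫ w, 𝓕 g w * charFun μ ((2 * π) • w) := by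
  have hflip := VectorFourier.integral_fourierIntegral_smul_eq_flip (μ := μ) (ν := volume)
    (L := -innerₗ V) (f := fun _ => 1) (g := (𝓕 g : 𝓢(V, ℂ))) Real.continuous_fourierChar
    (continuous_inner (𝕜 := ℝ) (E := V)).neg (integrable_const _)
    (𝓕 g : 𝓢(V, ℂ)).integrable
  have hcharFun : ∀ w : V, VectorFourier.fourierIntegral 𝐞 μ (-innerₗ V) (fun _ => (1 : ℂ)) w =
      charFun μ ((2 * π) • w) := fun w => by
    simp only [VectorFourier.fourierIntegral, charFun_apply, LinearMap.neg_apply,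
      innerₗ_apply_apply, neg_neg, inner_smul_right, Circle.smul_def, Real.fourierChar_apply,
      smul_eq_mul, mul_one]
  have hinv : ∀ x : V, VectorFourier.fourierIntegral 𝐞 volume (-innerₗ V).flip
      (𝓕 g : 𝓢(V, ℂ)) x = g x := fun x => by
    conv_rhs => rw [← FourierTransform.fourierInv_fourier_eq (F := 𝓢(V, ℂ)) g]
    rw [SchwartzMap.fourierInv_coe, Real.fourierInv_eq]
    simp [VectorFourier.fourierIntegral, real_inner_comm]
  simp only [hcharFun, hinv, smul_eq_mul, one_mul] at hflip
  rw [← hflip]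
  simp only [mul_comm]

theorem setIntegral_closedBall_eq_integral_fourier_mul_charFun {μ : Measure V} [IsFiniteMeasure μ]
    (hμ : Integrable (charFun μ)) {f : V → ℂ} (hf : ContDiff ℝ ∞ f) {r : ℝ} (hr : 0 < r) :
    ∫ x in closedBall 0 r, f x ∂μ =
      ∫ w, 𝓕 ((closedBall 0 r).indicator f) w * charFun μ ((2 * π) • w) := by
  obtain ⟨g, hbound, hlim⟩ := exists_schwartzMap_tendsto_indicator_closedBall hf hr
  set B : V → ℝ := (closedBall 0 (r + 1)).indicator fun x => ‖f x‖
  have hB_int : ∀ ν : Measure V, IsFiniteMeasureOnCompacts ν → Integrable B ν := fun ν _ =>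
    (integrable_indicator_iff measurableSet_closedBall).2
      (hf.continuous.norm.continuousOn.integrableOn_compact (isCompact_closedBall 0 (r + 1)))
  have hnorm : ∀ x w : V, ∀ z : ℂ, ‖𝐞 (-⟪x, w⟫) • z‖ = ‖z‖ := fun x w z => Circle.norm_smul _ z
  have hfourier_bound : ∀ n w, ‖𝓕 (g n : V → ℂ) w‖ ≤ ∫ x, B x := fun n w => by
    rw [Real.fourier_eq]
    exact norm_integral_le_of_norm_le (hB_int _ inferInstance)
      (ae_of_all _ fun x => (hnorm x w _).trans_le (hbound n x))
  have hfourier_lim : ∀ w, Tendsto (fun n => 𝓕 (g n : V → ℂ) w) atTop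
      (𝓝 (𝓕 ((closedBall 0 r).indicator f) w)) := fun w => by
    simp only [Real.fourier_eq]
    refine tendsto_integral_of_dominated_convergence B (fun n => ?_) (hB_int _ inferInstance)
      (fun n => ae_of_all _ fun x => (hnorm x w _).trans_le (hbound n x))
      (ae_of_all _ fun x => (hlim x).const_smul _)
    have := (g n).continuous
    exact Continuous.aestronglyMeasurable (by fun_prop)
  have hleft : Tendsto (fun n => ∫ x, g n x ∂μ) atTop (𝓝 (∫ x in closedBall 0 r, f x ∂μ)) := by
    rw [← integral_indicator measurableSet_closedBall]
    exact tendsto_integral_of_dominated_convergence B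
      (fun n => (g n).continuous.aestronglyMeasurable) (hB_int _ inferInstance)
      (fun n => ae_of_all _ (hbound n)) (ae_of_all _ hlim)
  have hcharFun : Integrable fun w : V => charFun μ ((2 * π) • w) :=
    hμ.comp_smul (by positivity)
  refine tendsto_nhds_unique (hleft.congr fun n =>
    integral_schwartzMap_eq_integral_fourier_mul_charFun μ (g n)) ?_
  refine tendsto_integral_of_dominated_convergence
    (fun w => (∫ x, B x) * ‖charFun μ ((2 * π) • w)‖) (fun n => ?_) (hcharFun.norm.const_mul _)
    (fun n => ae_of_all _ fun w => ?_) (ae_of_all _ fun w => (hfourier_lim w).mul_const _)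
  · exact (𝓕 (g n)).continuous.aestronglyMeasurable.mul hcharFun.aestronglyMeasurable
  · rw [norm_mul]
    gcongr
    exact hfourier_bound n w

lemma intervalIntegral_sq_mul_cos (a e : ℝ) :
    ∫ x in -e..e, x ^ 2 * Real.cos (a * x) = 2 * e ^ 3 * sqCosKernel (a * e) := by
  have hcont : Continuous fun x : ℝ => x ^ 2 * Real.cos (a * x) := by fun_prop
  have hneg := intervalIntegral.integral_comp_neg (a := -e) (b := 0)
    fun x => x ^ 2 * Real.cos (a * x)
  have hscale := intervalIntegral.smul_integral_comp_mul_right (a := 0) (b := 1)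
    (fun x => x ^ 2 * Real.cos (a * x)) e
  have hpt : ∀ z : ℝ, (z * e) ^ 2 * Real.cos (a * (z * e)) =
      e ^ 2 * (z ^ 2 * Real.cos (a * e * z)) := fun z => by
    rw [mul_pow, mul_comm z e, ← mul_assoc a]
    ring
  simp only [neg_sq, mul_neg, Real.cos_neg, neg_neg, neg_zero] at hneg
  rw [zero_mul, one_mul, smul_eq_mul] at hscale
  rw [← intervalIntegral.integral_add_adjacent_intervals (hcont.intervalIntegrable _ 0)
    (hcont.intervalIntegrable 0 _), hneg, ← hscale]
  simp_rw [hpt]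
  rw [intervalIntegral.integral_const_mul, sqCosKernel]
  ring

lemma intervalIntegral_sq_mul_sin (a e : ℝ) : ∫ x in -e..e, x ^ 2 * Real.sin (a * x) = 0 := by
  have h := intervalIntegral.integral_comp_neg (a := -e) (b := e)
    fun x => x ^ 2 * Real.sin (a * x)
  simp only [neg_sq, mul_neg, Real.sin_neg, neg_neg, intervalIntegral.integral_neg] at h
  linarith

lemma fourier_indicator_closedBall_sq {e : ℝ} (he : 0 ≤ e) (w : ℝ) :
    𝓕 ((closedBall 0 e).indicator fun x : ℝ => (x : ℂ) ^ 2) w =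
      (2 * e ^ 3 * sqCosKernel (2 * π * e * w) : ℝ) := by
  have hsplit : ∀ x : ℝ, 𝐞 (-⟪x, w⟫) • (x : ℂ) ^ 2 =
      ((x ^ 2 * Real.cos (2 * π * w * x) : ℝ) : ℂ) -
        ((x ^ 2 * Real.sin (2 * π * w * x) : ℝ) : ℂ) * I := fun x => by
    have hphase : ((2 * π * -⟪x, w⟫ : ℝ) : ℂ) * I = -((2 * π * w * x : ℝ) : ℂ) * I := by
      simp
      ring
    rw [Circle.smul_def, Real.fourierChar_apply, smul_eq_mul, hphase, Complex.exp_mul_I,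
      Complex.cos_neg, Complex.sin_neg]
    push_cast
    ring
  have hcos : Continuous fun x : ℝ => ((x ^ 2 * Real.cos (2 * π * w * x) : ℝ) : ℂ) := by fun_prop
  have hsin : Continuous fun x : ℝ => ((x ^ 2 * Real.sin (2 * π * w * x) : ℝ) : ℂ) * I := by
    fun_prop
  have hindicator : (fun x : ℝ => 𝐞 (-⟪x, w⟫) • (closedBall 0 e).indicator
      (fun x : ℝ => (x : ℂ) ^ 2) x) =
      (Icc (-e) e).indicator fun x : ℝ => 𝐞 (-⟪x, w⟫) • (x : ℂ) ^ 2 := by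
    ext x
    rw [Real.closedBall_eq_Icc, zero_sub, zero_add]
    by_cases hx : x ∈ Icc (-e) e <;> simp [hx]
  rw [Real.fourier_eq, hindicator, integral_indicator measurableSet_Icc,
    integral_Icc_eq_integral_Ioc, ← intervalIntegral.integral_of_le (neg_le_self he)]
  simp_rw [hsplit]
  rw [intervalIntegral.integral_sub (hcos.intervalIntegrable _ _) (hsin.intervalIntegrable _ _),
    intervalIntegral.integral_mul_const, intervalIntegral.integral_ofReal,
    intervalIntegral.integral_ofReal, intervalIntegral_sq_mul_cos, intervalIntegral_sq_mul_sin,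
    Complex.ofReal_zero, zero_mul, sub_zero, mul_right_comm _ w e]

lemma ofReal_setIntegral_sq_eq_integral_sqCosKernel_mul_charFun {μ : Measure ℝ}
    [IsFiniteMeasure μ] (hμ : Integrable (charFun μ)) {e : ℝ} (he : 0 < e) :
    ((∫ x in {x : ℝ | |x| ≤ e}, x ^ 2 ∂μ : ℝ) : ℂ) =
      (e ^ 2 / π : ℝ) * ∫ v, (sqCosKernel v : ℂ) * charFun μ (v / e) := by
  have hball : {x : ℝ | |x| ≤ e} = closedBall 0 e := by ext; simp
  have hfourier := setIntegral_closedBall_eq_integral_fourier_mul_charFun hμ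
    (f := fun x : ℝ => (x : ℂ) ^ 2) (Complex.ofRealCLM.contDiff.pow 2) he
  have hscale := Measure.integral_comp_mul_left
    (fun v : ℝ => (sqCosKernel v : ℂ) * charFun μ (v / e)) (2 * π * e)
  have hconst : ((e ^ 2 / π : ℝ) : ℂ) = ((2 * e ^ 3 : ℝ) : ℂ) * (((2 * π * e)⁻¹ : ℝ) : ℂ) := by
    rw [← Complex.ofReal_mul]
    congr 1
    field_simp
  rw [abs_of_pos (by positivity), Complex.real_smul] at hscale
  have hcast : ((∫ x in closedBall 0 e, x ^ 2 ∂μ : ℝ) : ℂ) =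
      ∫ x in closedBall 0 e, (x : ℂ) ^ 2 ∂μ := by
    simp_rw [← Complex.ofReal_pow]
    exact integral_ofReal.symm
  rw [hball, hcast, hfourier, hconst, mul_assoc, ← hscale, ← integral_const_mul]
  congr with w
  rw [fourier_indicator_closedBall_sq he.le, smul_eq_mul,
    show 2 * π * e * w / e = 2 * π * w by field_simp, Complex.ofReal_mul, mul_assoc]

theorem setIntegral_sq_eq_integral_sqCosKernel_mul_re_charFun {μ : Measure ℝ} [IsFiniteMeasure μ]
    (hμ : Integrable (charFun μ)) {e : ℝ} (he : 0 < e) :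
    ∫ x in {x : ℝ | |x| ≤ e}, x ^ 2 ∂μ =
      2 / π * e ^ 2 * ∫ v in Ioi 0, sqCosKernel v * (charFun μ (v / e)).re := by
  have hint : Integrable fun v => (sqCosKernel v : ℂ) * charFun μ (v / e) :=
    (hμ.comp_div he.ne').bdd_mul
      (Complex.continuous_ofReal.comp continuous_sqCosKernel).aestronglyMeasurable
      (ae_of_all _ fun v => by simpa using abs_sqCosKernel_le_one v)
  have heven : ∀ v, ((sqCosKernel v : ℂ) * charFun μ (v / e)).re =
      sqCosKernel |v| * (charFun μ (|v| / e)).re := fun v => by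
    rw [Complex.re_ofReal_mul]
    rcases abs_choice v with h | h
    · rw [h]
    · rw [h, sqCosKernel_neg, neg_div, charFun_neg, Complex.conj_re]
  have hre : (∫ v, (sqCosKernel v : ℂ) * charFun μ (v / e)).re =
      2 * ∫ v in Ioi 0, sqCosKernel v * (charFun μ (v / e)).re := by
    rw [← integral_comp_abs (f := fun v => sqCosKernel v * (charFun μ (v / e)).re)]
    simp_rw [← heven]
    exact (integral_re hint).symm
  have h := congrArg Complex.re
    (ofReal_setIntegral_sq_eq_integral_sqCosKernel_mul_charFun hμ he)
  rw [Complex.ofReal_re, Complex.re_ofReal_mul, hre] at h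
  rw [h]
  ring

end CharFun

/-! ### The Gaussian truncated second moment -/

lemma integrable_charFun_gaussianReal (m : ℝ) {v : ℝ≥0} (hv : v ≠ 0) :
    Integrable (charFun (gaussianReal m v)) := by
  have hv' : (0 : ℝ) < v := by positivity
  refine (integrable_exp_neg_mul_sq (half_pos hv')).mono'
    measurable_charFun.aestronglyMeasurable (ae_of_all _ fun t => le_of_eq ?_)
  have hreal : (v * t ^ 2 / 2 : ℂ) = (v * t ^ 2 / 2 : ℝ) := by push_cast; rfl
  rw [charFun_gaussianReal, Complex.norm_exp, hreal, ← Complex.ofReal_mul, Complex.sub_re,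
    Complex.re_ofReal_mul, Complex.I_re, Complex.ofReal_re]
  congr 1
  ring

lemma hasDerivAt_mul_exp_neg_sq_div {v x : ℝ} (hv : v ≠ 0) (hx : x ≠ 0) :
    HasDerivAt (fun x => -((v * x + v ^ 2 / x) * Real.exp (-x ^ 2 / (2 * v))))
      ((x ^ 2 + v ^ 2 / x ^ 2) * Real.exp (-x ^ 2 / (2 * v))) x := by
  refine (((((hasDerivAt_id x).const_mul v).fun_add ((hasDerivAt_inv hx).const_mul (v ^ 2))).fun_mul
    ((hasDerivAt_pow 2 x).fun_neg.div_const (2 * v)).exp).fun_neg).congr_deriv ?_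
  simp only [id]
  field_simp
  ring

lemma tendsto_mul_exp_neg_sq_div_atTop {v : ℝ} (hv : 0 < v) :
    Tendsto (fun x => -((v * x + v ^ 2 / x) * Real.exp (-x ^ 2 / (2 * v)))) atTop (𝓝 0) := by
  have hpow : ∀ s : ℝ, Tendsto (fun x : ℝ => x ^ s * Real.exp (-(1 / (2 * v)) * x ^ 2)) atTop
      (𝓝 0) := fun s =>
    (rpow_mul_exp_neg_mul_sq_isLittleO_exp_neg (by positivity) s).isBigO.trans_tendsto
      (Real.tendsto_exp_atBot.comp (tendsto_id.const_mul_atTop_of_neg (by norm_num)))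
  have h := (((hpow 1).const_mul v).add ((hpow (-1)).const_mul (v ^ 2))).neg
  simp only [mul_zero, add_zero, neg_zero] at h
  refine h.congr fun x => ?_
  rw [Real.rpow_one, Real.rpow_neg_one, show -(1 / (2 * v)) * x ^ 2 = -x ^ 2 / (2 * v) by ring]
  ring

lemma integral_Ioi_sq_mul_exp_neg_sq_div_le {v e : ℝ} (hv : 0 < v) (he : 0 < e) :
    ∫ x in Ioi e, x ^ 2 * Real.exp (-x ^ 2 / (2 * v)) ≤
      (v * e + v ^ 2 / e) * Real.exp (-e ^ 2 / (2 * v)) := by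
  have hderiv : ∀ x ∈ Ici e, HasDerivAt
      (fun x => -((v * x + v ^ 2 / x) * Real.exp (-x ^ 2 / (2 * v))))
      ((x ^ 2 + v ^ 2 / x ^ 2) * Real.exp (-x ^ 2 / (2 * v))) x := fun x hx =>
    hasDerivAt_mul_exp_neg_sq_div hv.ne' (he.trans_le hx).ne'
  have hnonneg : ∀ x ∈ Ioi e, 0 ≤ (x ^ 2 + v ^ 2 / x ^ 2) * Real.exp (-x ^ 2 / (2 * v)) :=
    fun x _ => by positivity
  have hlim := tendsto_mul_exp_neg_sq_div_atTop hv
  calc ∫ x in Ioi e, x ^ 2 * Real.exp (-x ^ 2 / (2 * v))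
      ≤ ∫ x in Ioi e, (x ^ 2 + v ^ 2 / x ^ 2) * Real.exp (-x ^ 2 / (2 * v)) := by
        refine integral_mono_of_nonneg (ae_of_all _ fun x => by positivity)
          (integrableOn_Ioi_deriv_of_nonneg' hderiv hnonneg hlim) (ae_of_all _ fun x => ?_)
        exact mul_le_mul_of_nonneg_right (le_add_of_nonneg_right (by positivity)) (by positivity)
    _ = (v * e + v ^ 2 / e) * Real.exp (-e ^ 2 / (2 * v)) := by
        rw [integral_Ioi_of_hasDerivAt_of_nonneg' hderiv hnonneg hlim]
        ring

lemma measurableSet_abs_le (e : ℝ) : MeasurableSet {x : ℝ | |x| ≤ e} :=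
  measurableSet_le measurable_norm measurable_const

lemma setIntegral_sq_gaussianReal_eq {v : ℝ≥0} (hv : v ≠ 0) {e : ℝ} (he : 0 ≤ e) :
    ∫ x in {x : ℝ | |x| ≤ e}, x ^ 2 ∂gaussianReal 0 v =
      v - 2 * (√(2 * π * v))⁻¹ * ∫ x in Ioi e, x ^ 2 * Real.exp (-x ^ 2 / (2 * v)) := by
  have hint : Integrable (fun x : ℝ => x ^ 2) (gaussianReal 0 v) :=
    (memLp_id_gaussianReal 2).integrable_sq
  have hvar : ∫ x, x ^ 2 ∂gaussianReal 0 v = v := by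
    have h := variance_fun_id_gaussianReal (μ := 0) (v := v)
    rwa [variance_of_integral_eq_zero aemeasurable_id' (integral_id_gaussianReal)] at h
  have hs := measurableSet_abs_le e
  have htail : ∫ x in {x : ℝ | |x| ≤ e}ᶜ, x ^ 2 ∂gaussianReal 0 v =
      2 * (√(2 * π * v))⁻¹ * ∫ x in Ioi e, x ^ 2 * Real.exp (-x ^ 2 / (2 * v)) := by
    have heven : ∀ x : ℝ, gaussianPDFReal 0 v x • {x : ℝ | |x| ≤ e}ᶜ.indicator (fun x => x ^ 2) x =
        (Ioi e).indicator
          (fun x => (√(2 * π * v))⁻¹ * (x ^ 2 * Real.exp (-x ^ 2 / (2 * v)))) |x| := fun x => by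
      by_cases hx : |x| ≤ e
      · simp [hx]
      · rw [indicator_of_mem (by exact hx), indicator_of_mem (by exact not_le.1 hx)]
        simp only [gaussianPDFReal, sub_zero, sq_abs, smul_eq_mul]
        ring
    rw [← integral_indicator hs.compl, integral_gaussianReal_eq_integral_smul hv]
    simp_rw [heven]
    rw [integral_comp_abs (f := (Ioi e).indicator
      fun x => (√(2 * π * v))⁻¹ * (x ^ 2 * Real.exp (-x ^ 2 / (2 * v)))),
      setIntegral_indicator measurableSet_Ioi,
      inter_eq_right.2 (Ioi_subset_Ioi he), integral_const_mul, ← mul_assoc]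
  rw [← htail, eq_sub_iff_add_eq, integral_add_compl hs hint, hvar]

theorem abs_setIntegral_sq_gaussianReal_sub_le {v : ℝ≥0} (hv : v ≠ 0) {e : ℝ} (he : 0 < e) :
    |∫ x in {x : ℝ | |x| ≤ e}, x ^ 2 ∂gaussianReal 0 v - v| ≤
      2 * (1 + v / e ^ 2) * (√v * e * Real.exp (-e ^ 2 / (2 * v))) := by
  have hv' : (0 : ℝ) < v := by positivity
  have hsqrt : √(v : ℝ) ≤ √(2 * π * v) := Real.sqrt_le_sqrt (by nlinarith [Real.pi_gt_three])
  rw [setIntegral_sq_gaussianReal_eq hv he.le, sub_sub_cancel_left, abs_neg, abs_of_nonneg]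
  · calc 2 * (√(2 * π * v))⁻¹ * ∫ x in Ioi e, x ^ 2 * Real.exp (-x ^ 2 / (2 * v))
        ≤ 2 * (√v)⁻¹ * ((v * e + v ^ 2 / e) * Real.exp (-e ^ 2 / (2 * v))) := by
          gcongr
          exact integral_Ioi_sq_mul_exp_neg_sq_div_le hv' he
      _ = 2 * (1 + v / e ^ 2) * ((v / √v) * e * Real.exp (-e ^ 2 / (2 * v))) := by
          field_simp
      _ = 2 * (1 + v / e ^ 2) * (√v * e * Real.exp (-e ^ 2 / (2 * v))) := by rw [Real.div_sqrt]
  · positivity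

/-! ### Comparison with the Gaussian law -/

section Comparison

variable {Y Cp Cm σ : ℝ}

lemma norm_tildeCF_le (hY1 : 1 < Y) (hY2 : Y < 2) (hC : 0 ≤ Cp + Cm) {h : ℝ} (hh : 0 ≤ h)
    (u : ℝ) : ‖tildeCF σ Y Cp Cm h u‖ ≤ Real.exp (-(σ ^ 2 * h / 2) * u ^ 2) := by
  have hΓ := (Gamma_neg_pos hY1 hY2).le
  have hre : 0 ≤ h * (stablePart Y Cp Cm u).re := by
    rw [re_stablePart, varsigma]
    positivity
  have hgauss : (σ ^ 2 * u ^ 2 * h / 2 : ℂ) = (σ ^ 2 * u ^ 2 * h / 2 : ℝ) := by push_cast; rfl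
  rw [tildeCF, Complex.norm_exp, hgauss, Complex.sub_re, Complex.neg_re, Complex.ofReal_re,
    Complex.re_ofReal_mul]
  gcongr
  linarith

lemma integrable_charFun_of_eq_tildeCF (hY1 : 1 < Y) (hY2 : Y < 2) (hC : 0 ≤ Cp + Cm) (hσ : σ ≠ 0)
    {h : ℝ} (hh : 0 < h) {μ : Measure ℝ} [IsFiniteMeasure μ]
    (hμ : ∀ u, charFun μ u = tildeCF σ Y Cp Cm h u) : Integrable (charFun μ) :=
  (integrable_exp_neg_mul_sq (by positivity)).mono' measurable_charFun.aestronglyMeasurable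
    (ae_of_all _ fun u => hμ u ▸ norm_tildeCF_le hY1 hY2 hC hh.le u)

lemma re_tildeCF_div {h e v : ℝ} (he : 0 < e) (hv : 0 < v) :
    (tildeCF σ Y Cp Cm h (v / e)).re = Real.exp (-(σ ^ 2 * h / e ^ 2 / 2 * v ^ 2)) *
      (Complex.exp (-((h * e ^ (-Y) : ℝ) * (stablePart Y Cp Cm 1 * (v ^ Y : ℝ))))).re := by
  rw [tildeCF, stablePart_of_pos (div_pos hv he), Real.div_rpow hv.le he.le, sub_eq_add_neg,
    Complex.exp_add, ← Complex.re_ofReal_mul]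
  congr 2
  · push_cast
    congr 1
    field_simp
  · rw [Real.rpow_neg he.le]
    push_cast
    congr 1
    ring

lemma charFun_gaussianReal_zero_div {h e v : ℝ} (hh : 0 ≤ h) :
    charFun (gaussianReal 0 (σ ^ 2 * h).toNNReal) (v / e) =
      (Real.exp (-(σ ^ 2 * h / e ^ 2 / 2 * v ^ 2)) : ℝ) := by
  rw [charFun_gaussianReal, Real.coe_toNNReal _ (by positivity)]
  push_cast
  congr 1
  field_simp
  ring

lemma setIntegral_sq_sub_gaussianReal_eq (hY1 : 1 < Y) (hY2 : Y < 2) (hC : 0 ≤ Cp + Cm)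
    (hσ : σ ≠ 0) {h e : ℝ} (hh : 0 < h) (he : 0 < e) {μ : Measure ℝ} [IsFiniteMeasure μ]
    (hμ : ∀ u, charFun μ u = tildeCF σ Y Cp Cm h u) :
    ∫ x in {x : ℝ | |x| ≤ e}, x ^ 2 ∂μ -
        ∫ x in {x : ℝ | |x| ≤ e}, x ^ 2 ∂gaussianReal 0 (σ ^ 2 * h).toNNReal =
      2 / π * e ^ 2 * ∫ v in Ioi 0, gaussKernel (σ ^ 2 * h / e ^ 2) v * ((Complex.exp
        (-((h * e ^ (-Y) : ℝ) * (stablePart Y Cp Cm 1 * (v ^ Y : ℝ))))).re - 1) := by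
  have hμ_int := integrable_charFun_of_eq_tildeCF hY1 hY2 hC hσ hh hμ
  have hN_int : Integrable (charFun (gaussianReal 0 (σ ^ 2 * h).toNNReal)) :=
    integrable_charFun_gaussianReal 0 (Real.toNNReal_pos.2 (by positivity)).ne'
  have hkernel : ∀ {ν : Measure ℝ} [IsFiniteMeasure ν], Integrable (charFun ν) →
      Integrable fun v => sqCosKernel v * (charFun ν (v / e)).re := fun hν =>
    (hν.comp_div he.ne').re.bdd_mul continuous_sqCosKernel.aestronglyMeasurable
      (ae_of_all _ abs_sqCosKernel_le_one)
  rw [setIntegral_sq_eq_integral_sqCosKernel_mul_re_charFun hμ_int he,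
    setIntegral_sq_eq_integral_sqCosKernel_mul_re_charFun hN_int he, ← mul_sub,
    ← integral_sub (hkernel hμ_int).integrableOn (hkernel hN_int).integrableOn]
  congr 1
  refine setIntegral_congr_fun measurableSet_Ioi fun v hv => ?_
  simp only [hμ, re_tildeCF_div he hv, charFun_gaussianReal_zero_div hh.le, Complex.ofReal_re,
    gaussKernel]
  ring

lemma two_div_pi_mul_sq_mul_expansion_eq_Afun_mul (hY1 : 1 < Y) (hY2 : Y < 2) (hC : 0 ≤ Cp + Cm)
    {h e : ℝ} (he : 0 < e) :
    2 / π * e ^ 2 * (h * e ^ (-Y) *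
      ((stablePart Y Cp Cm 1).re * Real.Gamma (Y + 1) * Real.sin (π * Y / 2)) *
        (1 / (2 - Y) - σ ^ 2 * h / e ^ 2 * ((Y + 1) * (Y + 2) / (2 * Y)))) =
      Afun Y Cp Cm σ e h * h := by
  have hpow : e ^ (2 - Y) = e ^ 2 * e ^ (-Y) := by
    rw [sub_eq_add_neg, Real.rpow_add he, Real.rpow_two]
  rw [Afun, hpow, ← two_div_pi_mul_re_stablePart_one hY1 hY2 hC]
  field_simp

theorem exists_abs_setIntegral_sq_sub_gaussianReal_sub_Afun_le (hY1 : 1 < Y) (hY2 : Y < 2)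
    (hC : 0 < Cp + Cm) (hσ : σ ≠ 0) :
    ∃ K, ∀ h > (0 : ℝ), ∀ e > (0 : ℝ), ∀ (μ : Measure ℝ) [IsFiniteMeasure μ],
      (∀ u, charFun μ u = tildeCF σ Y Cp Cm h u) →
      |∫ x in {x : ℝ | |x| ≤ e}, x ^ 2 ∂μ -
          ∫ x in {x : ℝ | |x| ≤ e}, x ^ 2 ∂gaussianReal 0 (σ ^ 2 * h).toNNReal -
          Afun Y Cp Cm σ e h * h| ≤
        K * (h ^ 3 * e ^ (-Y - 2) + h ^ 2 * e ^ (2 - 2 * Y)) := by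
  obtain ⟨K, hK⟩ := exists_abs_integral_gaussKernel_mul_re_exp_sub_le
    (re_stablePart_one_pos hY1 hY2 hC) hY1 hY2
  refine ⟨2 / π * |K| * max (σ ^ 4) 1, fun h hh e he μ _ hμ => ?_⟩
  have hle := hK (σ ^ 2 * h / e ^ 2) (by positivity) (h * e ^ (-Y)) (by positivity)
  rw [setIntegral_sq_sub_gaussianReal_eq hY1 hY2 hC.le hσ hh he hμ]
  set J := ∫ v in Ioi 0, gaussKernel (σ ^ 2 * h / e ^ 2) v * ((Complex.exp
    (-((h * e ^ (-Y) : ℝ) * (stablePart Y Cp Cm 1 * (v ^ Y : ℝ))))).re - 1)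
  set G := (stablePart Y Cp Cm 1).re * Real.Gamma (Y + 1) * Real.sin (π * Y / 2)
  have hpow₁ : e ^ 2 * (e ^ (-Y) * (1 / e ^ 2) ^ 2) = e ^ (-Y - 2) := by
    rw [Real.rpow_sub he, Real.rpow_two]
    field_simp
  have hpow₂ : e ^ 2 * (e ^ (-Y)) ^ 2 = e ^ (2 - 2 * Y) := by
    rw [← Real.rpow_natCast (e ^ (-Y)), ← Real.rpow_mul he.le, ← Real.rpow_two, ← Real.rpow_add he]
    congr 1
    push_cast
    ring
  have hmain : 2 / π * e ^ 2 * (h * e ^ (-Y) * G *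
      (1 / (2 - Y) - σ ^ 2 * h / e ^ 2 * ((Y + 1) * (Y + 2) / (2 * Y)))) =
      Afun Y Cp Cm σ e h * h := two_div_pi_mul_sq_mul_expansion_eq_Afun_mul hY1 hY2 hC.le he
  rw [← hmain, ← mul_sub, abs_mul, abs_of_pos (by positivity)]
  calc 2 / π * e ^ 2 * |J - h * e ^ (-Y) * G *
        (1 / (2 - Y) - σ ^ 2 * h / e ^ 2 * ((Y + 1) * (Y + 2) / (2 * Y)))|
      ≤ 2 / π * e ^ 2 * (|K| * (h * e ^ (-Y) * (σ ^ 2 * h / e ^ 2) ^ 2 + (h * e ^ (-Y)) ^ 2)) := by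
        gcongr
        exact hle.trans (by gcongr; exact le_abs_self K)
    _ = 2 / π * |K| * (σ ^ 4 * (h ^ 3 * e ^ (-Y - 2)) + 1 * (h ^ 2 * e ^ (2 - 2 * Y))) := by
        rw [← hpow₁, ← hpow₂]
        ring
    _ ≤ 2 / π * |K| * (max (σ ^ 4) 1 * (h ^ 3 * e ^ (-Y - 2)) +
          max (σ ^ 4) 1 * (h ^ 2 * e ^ (2 - 2 * Y))) := by
        gcongr
        · exact le_max_left _ _
        · exact le_max_right _ _
    _ = _ := by ring

theorem exists_abs_setIntegral_sq_sub_add_Afun_le (hY1 : 1 < Y) (hY2 : Y < 2) (hC : 0 < Cp + Cm)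
    (hσ : σ ≠ 0) :
    ∃ K, ∀ h > (0 : ℝ), ∀ e > (0 : ℝ), ∀ (μ : Measure ℝ) [IsFiniteMeasure μ],
      (∀ u, charFun μ u = tildeCF σ Y Cp Cm h u) →
      |∫ x in {x : ℝ | |x| ≤ e}, x ^ 2 ∂μ - (σ ^ 2 * h + Afun Y Cp Cm σ e h * h)| ≤
        K * (h ^ 3 * e ^ (-Y - 2) + h ^ 2 * e ^ (2 - 2 * Y)) +
          2 * |σ| * (1 + σ ^ 2 * (h / e ^ 2)) *
            (√h * e * Real.exp (-e ^ 2 / (2 * σ ^ 2 * h))) := by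
  obtain ⟨K, hK⟩ :=
    exists_abs_setIntegral_sq_sub_gaussianReal_sub_Afun_le (σ := σ) hY1 hY2 hC hσ
  refine ⟨K, fun h hh e he μ _ hμ => ?_⟩
  have hvar : ((σ ^ 2 * h).toNNReal : ℝ) = σ ^ 2 * h := Real.coe_toNNReal _ (by positivity)
  have hgauss := abs_setIntegral_sq_gaussianReal_sub_le
    (Real.toNNReal_pos.2 (show 0 < σ ^ 2 * h by positivity)).ne' he
  rw [hvar, Real.sqrt_mul (sq_nonneg σ), Real.sqrt_sq_eq_abs, ← mul_assoc 2 (σ ^ 2)] at hgauss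
  calc |∫ x in {x : ℝ | |x| ≤ e}, x ^ 2 ∂μ - (σ ^ 2 * h + Afun Y Cp Cm σ e h * h)|
      = |(∫ x in {x : ℝ | |x| ≤ e}, x ^ 2 ∂μ -
            ∫ x in {x : ℝ | |x| ≤ e}, x ^ 2 ∂gaussianReal 0 (σ ^ 2 * h).toNNReal -
            Afun Y Cp Cm σ e h * h) +
          (∫ x in {x : ℝ | |x| ≤ e}, x ^ 2 ∂gaussianReal 0 (σ ^ 2 * h).toNNReal -
            σ ^ 2 * h)| := by
        congr 1
        ring
    _ ≤ _ := (abs_add_le _ _).trans (add_le_add (hK h hh e he μ hμ) hgauss)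
    _ = _ := by ring

end Comparison

section Asymptotics

lemma exists_add_eq_of_isBigO_add {α E F : Type*} [SeminormedAddCommGroup E]
    [SeminormedAddCommGroup F] {l : Filter α} {f : α → E} {g₁ g₂ : α → F}
    (hf : f =O[l] fun x => g₁ x + g₂ x) :
    ∃ f₁ f₂ : α → E, (∀ x, f x = f₁ x + f₂ x) ∧ f₁ =O[l] g₁ ∧ f₂ =O[l] g₂ := by
  classical
  obtain ⟨K, hK, hbound⟩ := hf.exists_pos
  have hle : ∀ᶠ x in l, ‖f x‖ ≤ K * (‖g₁ x‖ + ‖g₂ x‖) := hbound.bound.mono fun x hx =>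
    hx.trans (mul_le_mul_of_nonneg_left (norm_add_le _ _) hK.le)
  refine ⟨fun x => if ‖g₂ x‖ ≤ ‖g₁ x‖ then f x else 0,
    fun x => if ‖g₂ x‖ ≤ ‖g₁ x‖ then 0 else f x, fun x => by dsimp only; split_ifs <;> simp,
    IsBigO.of_bound (2 * K) ?_, IsBigO.of_bound (2 * K) ?_⟩
  all_goals
    filter_upwards [hle] with x hx
    split_ifs
    all_goals first
      | nlinarith
      | rw [norm_zero]; positivity

variable {ι : Type*} {l : Filter ι} {Y Cp Cm σ : ℝ} {h ε : ι → ℝ} {μ : ι → Measure ℝ}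

lemma isBigO_setIntegral_sq_sub_add_Afun (hY1 : 1 < Y) (hY2 : Y < 2) (hC : 0 < Cp + Cm)
    (hσ : σ ≠ 0) (hh : ∀ᶠ i in l, 0 < h i) (hε : ∀ᶠ i in l, 0 < ε i)
    (hhε : (fun i => √(h i)) =O[l] ε) (hμ : ∀ᶠ i in l, IsFiniteMeasure (μ i))
    (hcf : ∀ᶠ i in l, ∀ u, charFun (μ i) u = tildeCF σ Y Cp Cm (h i) u) :
    (fun i => ∫ x in {x : ℝ | |x| ≤ ε i}, x ^ 2 ∂μ i -
        (σ ^ 2 * h i + Afun Y Cp Cm σ (ε i) (h i) * h i)) =O[l] fun i =>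
      (h i ^ 3 * ε i ^ (-Y - 2) + h i ^ 2 * ε i ^ (2 - 2 * Y)) +
        √(h i) * ε i * Real.exp (-ε i ^ 2 / (2 * σ ^ 2 * h i)) := by
  obtain ⟨K, hK⟩ := exists_abs_setIntegral_sq_sub_add_Afun_le (σ := σ) hY1 hY2 hC hσ
  obtain ⟨c, hc⟩ := hhε.bound
  refine IsBigO.of_bound (|K| + 2 * |σ| * (1 + σ ^ 2 * c ^ 2)) ?_
  filter_upwards [hh, hε, hc, hμ, hcf] with i hhi hεi hci hμi hcfi
  have hratio : h i / ε i ^ 2 ≤ c ^ 2 := by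
    rw [div_le_iff₀ (by positivity), ← mul_pow, ← Real.sq_sqrt hhi.le]
    rw [Real.norm_of_nonneg (Real.sqrt_nonneg _), Real.norm_of_nonneg hεi.le] at hci
    gcongr
  rw [Real.norm_eq_abs, Real.norm_of_nonneg (by positivity), add_mul]
  refine (hK (h i) hhi (ε i) hεi (μ i) hcfi).trans (add_le_add ?_ ?_)
  · exact mul_le_mul (le_abs_self K) (le_add_of_nonneg_right (by positivity)) (by positivity)
      (abs_nonneg K)
  · gcongr
    exact le_add_of_nonneg_left (by positivity)

theorem truncated_second_moment_stable_general (hY1 : 1 < Y) (hY2 : Y < 2) (hC : 0 < Cp + Cm)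
    (hσ : σ ≠ 0) (hh : ∀ᶠ i in l, 0 < h i) (hε : ∀ᶠ i in l, 0 < ε i)
    (hhε : (fun i => √(h i)) =O[l] ε) (hμ : ∀ᶠ i in l, IsFiniteMeasure (μ i))
    (hcf : ∀ᶠ i in l, ∀ u, charFun (μ i) u = tildeCF σ Y Cp Cm (h i) u) :
    ∃ R₁ R₂ R₃ : ι → ℝ,
      (∀ i, ∫ x in {x : ℝ | |x| ≤ ε i}, x ^ 2 ∂μ i =
        σ ^ 2 * h i + Afun Y Cp Cm σ (ε i) (h i) * h i + R₁ i + R₂ i + R₃ i) ∧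
      R₁ =O[l] (fun i => h i ^ 3 * ε i ^ (-Y - 2)) ∧
      R₂ =O[l] (fun i => h i ^ 2 * ε i ^ (2 - 2 * Y)) ∧
      R₃ =O[l] (fun i => √(h i) * ε i * Real.exp (-ε i ^ 2 / (2 * σ ^ 2 * h i))) := by
  obtain ⟨R₁₂, R₃, hadd, hR₁₂, hR₃⟩ := exists_add_eq_of_isBigO_add
    (isBigO_setIntegral_sq_sub_add_Afun hY1 hY2 hC hσ hh hε hhε hμ hcf)
  obtain ⟨R₁, R₂, hadd₁₂, hR₁, hR₂⟩ := exists_add_eq_of_isBigO_add hR₁₂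
  refine ⟨R₁, R₂, R₃, fun i => ?_, hR₁, hR₂, hR₃⟩
  rw [add_assoc _ (R₁ i), ← hadd₁₂, add_assoc, ← hadd]
  exact (add_sub_cancel _ _).symm

end Asymptotics

/-- Proposition B.1: small-time expansion of the truncated second moment of
`X̃_h`: `E(X̃_h² 1_{|X̃_h| ≤ ε}) = σ²h + A(ε,h)h + R(h)` with `R` a sum of four explicit
big-O remainders. -/
theorem truncated_second_moment_stable
    (Y Cp Cm σ : ℝ)
    (hY1 : 1 < Y) (hY2 : Y < 2) (hCp : 0 < Cp) (hCm : 0 < Cm) (hσ : 0 < σ)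
    -- the law `μtilde h` of `X̃_h`
    (μtilde : ℝ → Measure ℝ)
    (hμt : ∀ h : ℝ, 0 < h → IsProbabilityMeasure (μtilde h))
    (hμtcf : ∀ h : ℝ, 0 < h → ∀ u : ℝ,
      ∫ x, Complex.exp (Complex.I * u * x) ∂(μtilde h) = tildeCF σ Y Cp Cm h u)
    -- the threshold `ε = ε(h)`
    (ε : ℝ → ℝ) (hεpos : ∀ h : ℝ, 0 < h → 0 < ε h)
    (hε0 : Tendsto ε (𝓝[>] (0 : ℝ)) (𝓝 0))
    (hεsqrt : Tendsto (fun h => ε h / Real.sqrt h) (𝓝[>] (0 : ℝ)) atTop) :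
    ∃ R₁ R₂ R₃ R₄ : ℝ → ℝ,
      (∀ h : ℝ, 0 < h →
        (∫ x, Set.indicator {x : ℝ | |x| ≤ ε h} (fun x => x ^ 2) x ∂(μtilde h))
          = σ ^ 2 * h + Afun Y Cp Cm σ (ε h) h * h + R₁ h + R₂ h + R₃ h + R₄ h) ∧
      R₁ =O[𝓝[>] (0 : ℝ)] (fun h => h ^ 3 * ε h ^ (-Y - 2)) ∧
      R₂ =O[𝓝[>] (0 : ℝ)] (fun h => h ^ 2 * ε h ^ (2 - 2 * Y)) ∧
      R₃ =O[𝓝[>] (0 : ℝ)]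
        (fun h => Real.sqrt h * ε h * Real.exp (-(ε h ^ 2) / (2 * σ ^ 2 * h))) ∧
      R₄ =O[𝓝[>] (0 : ℝ)]
        (fun h => Real.sqrt h * ε h ^ (3 - Y) * Real.exp (-(ε h ^ 2) / (8 * σ ^ 2 * h))) := by
  have hpos : ∀ᶠ h in 𝓝[>] (0 : ℝ), 0 < h := eventually_mem_nhdsWithin
  have hsqrt : (fun h => √h) =O[𝓝[>] (0 : ℝ)] ε := IsBigO.of_bound 1 <| by
    filter_upwards [hpos, hεsqrt.eventually_ge_atTop 1] with h hh hle
    rw [one_mul, Real.norm_of_nonneg (Real.sqrt_nonneg h), Real.norm_of_nonneg (hεpos h hh).le]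
    exact (one_le_div (Real.sqrt_pos.2 hh)).1 hle
  have hcf : ∀ h, 0 < h → ∀ u, charFun (μtilde h) u = tildeCF σ Y Cp Cm h u := fun h hh u => by
    simp only [charFun_apply_real, ← hμtcf h hh u, mul_comm, mul_left_comm]
  obtain ⟨R₁, R₂, R₃, hadd, hR₁, hR₂, hR₃⟩ := truncated_second_moment_stable_general hY1 hY2
    (add_pos hCp hCm) hσ.ne' hpos (hpos.mono hεpos) hsqrt
    (hpos.mono fun h hh => have := hμt h hh; inferInstance) (hpos.mono hcf)
  refine ⟨R₁, R₂, R₃, 0, fun h _ => ?_, hR₁, hR₂, hR₃, isBigO_zero _ _⟩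
  rw [integral_indicator (measurableSet_abs_le _), Pi.zero_apply, add_zero]
  exact hadd h

end
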